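/- arXiv:2312.15531 — 2 statements merged into one kernel-verified Lean document; each statement's English description precedes it below -/
import Mathlib

section
/- Let t0 > 0, let (X, μ) be a measure space, let Λ : X → [0,∞) be measurable, and let b : [t0,∞) → ℝ be a measurable function such that m/t ≤ b(t) ≤ M/t for every t ≥ t0, where M ≥ m > 0 are real constants. Set μ0 := min{m, 2}. Let u : [t0,∞) × X → ℝ be such that for every ξ ∈ X the function t ↦ u(t,ξ) is a solution of the damped oscillator equation u'' + b(t)u' + Λ(ξ)²u = 0, and such that for each t ≥ t0 the functions ξ ↦ u(t,ξ) and ξ ↦ ∂_t u(t,ξ) are measurable. Then for every t ≥ t0 one has ∫_X [ (∂_t u(t,ξ))² + Λ(ξ)²·u(t,ξ)² ] dμ(ξ) ≤ e^{m(M+8)} · ( ∫_X [ 4(∂_t u(t0,ξ))² + (Λ(ξ)² + 2/t0²)·u(t0,ξ)² ] dμ(ξ) ) · (t0/t)^{μ0}. -/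
open Real Set Filter MeasureTheory intervalIntegral

/-- A solution of the damped oscillator equation `u'' + b(t) u' + λ² u = 0` on `[t0, ∞)`:
a `C¹` function `u` (with derivative `u'`) whose derivative is locally absolutely continuous
(i.e. it is the integral of a locally integrable function `w`) and which satisfies the
equation almost everywhere on `[t0, ∞)`. -/
def IsDampedSol (t0 : ℝ) (b : ℝ → ℝ) (lam : ℝ) (u u' : ℝ → ℝ) : Prop :=
  (∀ t ∈ Ici t0, HasDerivAt u (u' t) t) ∧
  ContinuousOn u' (Ici t0) ∧
  ∃ w : ℝ → ℝ,
    (∀ T ≥ t0, IntervalIntegrable w volume t0 T) ∧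
    (∀ t ∈ Ici t0, u' t = u' t0 + ∫ s in t0..t, w s) ∧
    (∀ᵐ t ∂(volume.restrict (Ici t0)), w t + b t * u' t + lam ^ 2 * u t = 0)


/-- An absolutely continuous function with a.e. nonpositive derivative decreases. -/
lemma ac_le_of_ae {f : ℝ → ℝ} {a b : ℝ} (hab : a ≤ b)
    (hf : AbsolutelyContinuousOnInterval f a b)
    (h : ∀ᵐ t : ℝ, t ∈ Ioo a b → ∃ d ≤ 0, HasDerivAt f d t) : f b ≤ f a := by
  have h1 := hf.integral_deriv_eq_sub
  have h2 : ∫ x in a..b, deriv f x ≤ 0 := by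
    rw [intervalIntegral.integral_of_le hab, MeasureTheory.integral_Ioc_eq_integral_Ioo]
    apply MeasureTheory.integral_nonpos_of_ae
    rw [Filter.EventuallyLE, ae_restrict_iff' measurableSet_Ioo]
    filter_upwards [h] with t ht htm
    obtain ⟨d, hd, hd'⟩ := ht htm
    rw [hd'.deriv]
    exact hd
  linarith

/-- Exit-time version. -/
lemma ac_nonpos_of_ae {f : ℝ → ℝ} {a b : ℝ} (hab : a ≤ b)
    (hf : AbsolutelyContinuousOnInterval f a b) (ha : f a ≤ 0)
    (h : ∀ᵐ t : ℝ, t ∈ Ioo a b → 0 < f t → ∃ d ≤ 0, HasDerivAt f d t) : f b ≤ 0 := by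
  have hc : ContinuousOn f (Icc a b) := by
    have := hf.continuousOn
    rwa [uIcc_of_le hab] at this
  have hcl : IsCompact (Icc a b ∩ f ⁻¹' (Iic 0)) :=
    isCompact_Icc.of_isClosed_subset (hc.preimage_isClosed_of_isClosed isClosed_Icc isClosed_Iic)
      inter_subset_left
  obtain ⟨τ, ⟨hτ1, hτ2⟩, hτ3⟩ := hcl.exists_isGreatest ⟨a, ⟨le_rfl, hab⟩, ha⟩
  have hle : f b ≤ f τ := by
    apply ac_le_of_ae hτ1.2
    · apply hf.mono
      rw [uIcc_of_le hab, uIcc_of_le hτ1.2]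
      exact Icc_subset_Icc_left hτ1.1
    · filter_upwards [h] with t ht htm
      apply ht ⟨lt_of_le_of_lt hτ1.1 htm.1, htm.2⟩
      by_contra hcon
      have := hτ3 ⟨⟨hτ1.1.trans htm.1.le, htm.2.le⟩, not_lt.mp hcon⟩
      linarith [htm.1]
  exact hle.trans hτ2

lemma ac_rpow {a b : ℝ} (ha : 0 < a) (hab : a ≤ b) (p : ℝ) :
    AbsolutelyContinuousOnInterval (fun t : ℝ => t ^ p) a b := by
  apply ContDiffOn.absolutelyContinuousOnInterval
  rw [uIcc_of_le hab]
  intro t ht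
  exact (Real.contDiffAt_rpow_const_of_ne (by linarith [ht.1])).contDiffWithinAt

/-- The facts on a solution that are used. -/
structure Osc (t0 m M lam : ℝ) (b u u' : ℝ → ℝ) : Prop where
  t0_pos : 0 < t0
  m_pos : 0 < m
  mM : m ≤ M
  lam_nn : 0 ≤ lam
  hb : ∀ t ≥ t0, m ≤ t * b t ∧ t * b t ≤ M
  du : ∀ t ≥ t0, HasDerivAt u (u' t) t
  acu : ∀ s t, t0 ≤ s → s ≤ t → AbsolutelyContinuousOnInterval u s t
  acu' : ∀ s t, t0 ≤ s → s ≤ t → AbsolutelyContinuousOnInterval u' s t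
  ddu : ∀ᵐ t : ℝ, t0 < t → HasDerivAt u' (-(b t * u' t) - lam ^ 2 * u t) t

lemma ac_congr {f g : ℝ → ℝ} {a b : ℝ} (hf : AbsolutelyContinuousOnInterval f a b)
    (h : ∀ x ∈ uIcc a b, f x = g x) : AbsolutelyContinuousOnInterval g a b := by
  rw [absolutelyContinuousOnInterval_iff] at hf ⊢
  intro ε hε
  obtain ⟨δ, hδ, H⟩ := hf ε hε
  refine ⟨δ, hδ, fun E hE hs => ?_⟩
  have := H E hE hs
  convert this using 1
  apply Finset.sum_congr rfl
  intro i hi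
  have := hE.1 i hi
  rw [h _ this.1, h _ this.2]

lemma osc_of_sol {t0 m M lam : ℝ} {b u u' : ℝ → ℝ} (ht0 : 0 < t0) (hm : 0 < m) (hmM : m ≤ M)
    (hl : 0 ≤ lam) (hb : ∀ t ≥ t0, m / t ≤ b t ∧ b t ≤ M / t)
    (h : IsDampedSol t0 b lam u u') : Osc t0 (min m 2) M lam b u u' := by
  obtain ⟨h1, h2, w, hw1, hw2, hw3⟩ := h
  refine ⟨ht0, by positivity, (min_le_left _ _).trans hmM, hl, ?_, h1, ?_, ?_, ?_⟩
  · intro t ht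
    have htp : 0 < t := by linarith
    obtain ⟨hb1, hb2⟩ := hb t ht
    rw [div_le_iff₀ htp] at hb1
    rw [le_div_iff₀ htp] at hb2
    have := min_le_left m 2
    constructor <;> linarith
  · intro s t hs hst
    have hsub : Icc s t ⊆ Ici t0 := fun x hx => hs.trans hx.1
    obtain ⟨C, hC⟩ := isCompact_Icc.exists_bound_of_continuousOn (h2.mono hsub)
    have hL : LipschitzOnWith C.toNNReal u (uIcc s t) := by
      rw [uIcc_of_le hst]
      apply (convex_Icc s t).lipschitzOnWith_of_nnnorm_hasDerivWithin_le (f' := u')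
      · intro x hx
        exact (h1 x (hsub hx)).hasDerivWithinAt
      · intro x hx
        have := hC x hx
        rw [← NNReal.coe_le_coe]
        exact this.trans (Real.le_coe_toNNReal C)
    exact hL.absolutelyContinuousOnInterval
  · intro s t hs hst
    have hA := (hw1 t (hs.trans hst)).absolutelyContinuousOnInterval_intervalIntegral
      (c := t0) left_mem_uIcc
    have hcst : AbsolutelyContinuousOnInterval (fun _ : ℝ => u' t0) t0 t :=
      ContDiffOn.absolutelyContinuousOnInterval contDiffOn_const
    have hB := hcst.fun_add hA
    have hC : AbsolutelyContinuousOnInterval u' t0 t := by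
      apply ac_congr hB
      intro x hx
      rw [uIcc_of_le (hs.trans hst)] at hx
      exact (hw2 x hx.1).symm
    apply hC.mono
    rw [uIcc_of_le (hs.trans hst), uIcc_of_le hst]
    exact Icc_subset_Icc_left hs
  · have hall : ∀ᵐ x : ℝ, ∀ n : ℕ, x ∈ uIcc t0 (t0 + n) → ∀ c ∈ uIcc t0 (t0 + n),
        HasDerivAt (fun x => ∫ t in c..x, w t) (w x) x := by
      rw [ae_all_iff]
      intro n
      have hn : (0 : ℝ) ≤ n := Nat.cast_nonneg n
      exact (hw1 (t0 + n) (by linarith)).ae_hasDerivAt_integral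
    rw [ae_restrict_iff' measurableSet_Ici] at hw3
    filter_upwards [hall, hw3] with t ht hwt htt
    obtain ⟨n, hn⟩ := exists_nat_ge (t - t0)
    have hle : t0 ≤ t0 + n := by linarith
    have hd := ht n (by rw [uIcc_of_le hle]; constructor <;> linarith) t0 left_mem_uIcc
    have hd2 : HasDerivAt (fun x => u' t0 + ∫ s in t0..x, w s) (w t) t := hd.const_add _
    have heq : -(b t * u' t) - lam ^ 2 * u t = w t := by
      have := hwt htt.le
      linarith
    rw [heq]
    apply hd2.congr_of_eventuallyEq
    filter_upwards [Ioi_mem_nhds htt] with x hx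
    exact hw2 x (mem_Ici.mpr (le_of_lt (mem_Ioi.mp hx)))

lemma Osc.low_small {t0 m M lam T : ℝ} {b u u' : ℝ → ℝ} (h : Osc t0 m M lam b u u')
    (hm1 : m ≤ 1) (hT : t0 ≤ T) (hlT : lam * T ≤ 1) :
    T ^ m * (u' T ^ 2 + lam ^ 2 * u T ^ 2) ≤
      t0 ^ m * (4 * u' t0 ^ 2 + (lam ^ 2 + 2 / t0 ^ 2) * u t0 ^ 2) := by
  have ht0 := h.t0_pos
  have hm := h.m_pos
  have hTp : 0 < T := by linarith
  set R : ℝ → ℝ := fun t => t ^ 2 * (u' t ^ 2 + lam ^ 2 * u t ^ 2)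
    + m * ((2 - m - lam ^ 2 * t ^ 2 / 2) * u t ^ 2) with hR
  have hmono : T ^ (m - 2) * R T ≤ t0 ^ (m - 2) * R t0 := by
    apply ac_le_of_ae (f := fun t => t ^ (m - 2) * R t) hT
    · apply (ac_rpow ht0 hT _).fun_mul
      have hu := h.acu t0 T le_rfl hT
      have hu' := h.acu' t0 T le_rfl hT
      have hp : AbsolutelyContinuousOnInterval (fun t : ℝ => t ^ 2) t0 T :=
        ContDiffOn.absolutelyContinuousOnInterval (by fun_prop)
      have hq : AbsolutelyContinuousOnInterval (fun t : ℝ => 2 - m - lam ^ 2 * t ^ 2 / 2) t0 T :=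
        ContDiffOn.absolutelyContinuousOnInterval (by fun_prop)
      have hu2 : AbsolutelyContinuousOnInterval (fun t => u t ^ 2) t0 T := by
        simpa only [pow_two] using hu.fun_mul hu
      have hu2' : AbsolutelyContinuousOnInterval (fun t => u' t ^ 2) t0 T := by
        simpa only [pow_two] using hu'.fun_mul hu'
      exact (hp.fun_mul (hu2'.fun_add (hu2.const_mul _))).fun_add ((hq.fun_mul hu2).const_mul _)
    · filter_upwards [h.ddu] with t ht htm
      have htp : 0 < t := by linarith [htm.1]
      have d1 := h.du t htm.1.le
      have d2 := ht htm.1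
      have dp : HasDerivAt (fun t : ℝ => t ^ (m - 2)) ((m - 2) * t ^ (m - 2 - 1)) t :=
        Real.hasDerivAt_rpow_const (Or.inl htp.ne')
      have dsq : HasDerivAt (fun t : ℝ => t ^ 2) (2 * t) t := by simpa using hasDerivAt_pow 2 t
      have dR := (dsq.fun_mul ((d2.fun_pow 2).fun_add ((d1.fun_pow 2).const_mul (lam ^ 2)))).fun_add
        (((((dsq.const_mul (lam ^ 2)).div_const 2).const_sub (2 - m)).fun_mul
          (d1.fun_pow 2)).const_mul m)
      refine ⟨_, ?_, dp.fun_mul dR⟩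
      have hbt := (h.hb t htm.1.le).1
      have hz : lam * t ≤ 1 := (mul_le_mul_of_nonneg_left htm.2.le h.lam_nn).trans hlT
      have hz0 : 0 ≤ lam * t := mul_nonneg h.lam_nn htp.le
      rw [show t ^ (m - 2 - 1) = t ^ (m - 2) / t by rw [Real.rpow_sub_one htp.ne']]
      have hP : 0 < t ^ (m - 2) := Real.rpow_pos_of_pos htp _
      set P := t ^ (m - 2)
      have hg : 0 ≤ 2 - m - lam ^ 2 * t ^ 2 / 2 := by nlinarith
      have key : (m - 2) * R t + t * (2 * t * (u' t ^ 2 + lam ^ 2 * u t ^ 2)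
          + t ^ 2 * (2 * u' t * (-(b t * u' t) - lam ^ 2 * u t) + lam ^ 2 * (2 * u t * u' t))
          + m * (-(lam ^ 2 * (2 * t) / 2) * u t ^ 2
            + (2 - m - lam ^ 2 * t ^ 2 / 2) * (2 * u t * u' t))) ≤ 0 := by
        have e1 : 0 ≤ (t * b t - m) * (t * u' t) ^ 2 := mul_nonneg (by linarith) (sq_nonneg _)
        have e2 : 0 ≤ m * (t * u' t - (2 - m - lam ^ 2 * t ^ 2 / 2) * u t) ^ 2 := by positivity
        have e3 : 0 ≤ m * (2 - m - lam ^ 2 * t ^ 2 / 2) * (lam * t * u t) ^ 2 :=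
          mul_nonneg (mul_nonneg hm.le hg) (sq_nonneg _)
        simp only [hR]
        nlinarith [e1, e2, e3]
      have := mul_nonpos_of_nonneg_of_nonpos (div_pos hP htp).le key
      refine le_of_eq_of_le ?_ this
      simp only [hR]
      push_cast
      field_simp
  have hpow : ∀ s : ℝ, 0 < s → s ^ m = s ^ (m - 2) * s ^ 2 := by
    intro s hs
    rw [← Real.rpow_natCast, ← Real.rpow_add hs]
    norm_num
  have hPT : 0 < T ^ (m - 2) := Real.rpow_pos_of_pos hTp _
  have hP0 : 0 < t0 ^ (m - 2) := Real.rpow_pos_of_pos ht0 _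
  have hz0 : 0 ≤ lam * T := mul_nonneg h.lam_nn hTp.le
  calc T ^ m * (u' T ^ 2 + lam ^ 2 * u T ^ 2) ≤ T ^ (m - 2) * R T := by
        rw [hpow T hTp, mul_assoc]
        apply mul_le_mul_of_nonneg_left _ hPT.le
        have hg : 0 ≤ 2 - m - lam ^ 2 * T ^ 2 / 2 := by nlinarith
        have : 0 ≤ m * ((2 - m - lam ^ 2 * T ^ 2 / 2) * u T ^ 2) := by positivity
        simp only [hR]
        linarith
    _ ≤ t0 ^ (m - 2) * R t0 := hmono
    _ ≤ _ := by
        rw [hpow t0 ht0, mul_assoc]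
        apply mul_le_mul_of_nonneg_left _ hP0.le
        have e : t0 ^ 2 * (4 * u' t0 ^ 2 + (lam ^ 2 + 2 / t0 ^ 2) * u t0 ^ 2)
          = t0 ^ 2 * (4 * u' t0 ^ 2) + lam ^ 2 * t0 ^ 2 * u t0 ^ 2 + 2 * u t0 ^ 2 := by
          field_simp
          ring
        rw [e]
        simp only [hR]
        have e1 : 0 ≤ (t0 * u' t0) ^ 2 := sq_nonneg _
        have e2 : 0 ≤ ((m - 1) * u t0) ^ 2 := sq_nonneg _
        have e3 : 0 ≤ m * (lam * t0 * u t0) ^ 2 := by positivity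
        nlinarith [sq_nonneg (u t0)]

lemma kappa_aux {κ m : ℝ} (hκ0 : 0 < κ) (hκ1 : κ ≤ 1 / 2) (hκ2 : κ ≤ m / 2) :
    1 + κ ≤ (1 - κ) * Real.exp (3 / 2 * m) := by
  have a1 : 1 + κ ≤ Real.exp κ := by linarith [Real.add_one_le_exp κ]
  have a2 : 1 + 2 * κ ≤ Real.exp (2 * κ) := by linarith [Real.add_one_le_exp (2 * κ)]
  have a3 : Real.exp κ * Real.exp (2 * κ) ≤ Real.exp (3 / 2 * m) := by
    rw [← Real.exp_add]; apply Real.exp_le_exp.mpr; linarith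
  have a4 : (1 + κ) * (1 + 2 * κ) ≤ Real.exp κ * Real.exp (2 * κ) := by
    gcongr
  have a5 : (1 - κ) * ((1 + κ) * (1 + 2 * κ)) ≤ (1 - κ) * Real.exp (3 / 2 * m) :=
    mul_le_mul_of_nonneg_left (a4.trans a3) (by linarith)
  have a6 : 1 ≤ (1 - κ) * (1 + 2 * κ) := by nlinarith
  have a7 : 1 * (1 + κ) ≤ (1 - κ) * (1 + 2 * κ) * (1 + κ) :=
    mul_le_mul_of_nonneg_right a6 (by linarith)
  linarith

set_option maxHeartbeats 1000000 in
lemma Osc.high {t0 m M lam t1 T : ℝ} {b u u' : ℝ → ℝ} (h : Osc t0 m M lam b u u')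
    (ht1 : t0 ≤ t1) (hT : t1 ≤ T) (hl1 : 1 ≤ lam * t1) (hlm : m ≤ lam * t1) :
    T ^ m * (u' T ^ 2 + lam ^ 2 * u T ^ 2) ≤
      Real.exp (m * (M + 5 / 2)) * (t1 ^ m * (u' t1 ^ 2 + lam ^ 2 * u t1 ^ 2)) := by
  have ht0 := h.t0_pos
  have hm := h.m_pos
  have ht1p : 0 < t1 := by linarith
  have hTp : 0 < T := by linarith
  have hlam : 0 < lam := by
    rcases h.lam_nn.eq_or_lt with h0 | h0
    · rw [← h0] at hl1; norm_num at hl1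
    · exact h0
  have hM : 0 < M := hm.trans_le h.mM
  set K := m * (M + 1) / lam with hK
  set R : ℝ → ℝ := fun t => t ^ 2 * (u' t ^ 2 + lam ^ 2 * u t ^ 2)
    + m * (t * (u t * u' t)) with hR
  have hmono : T ^ (m - 2) * R T * Real.exp (K * T⁻¹) ≤
      t1 ^ (m - 2) * R t1 * Real.exp (K * t1⁻¹) := by
    apply ac_le_of_ae (f := fun t => t ^ (m - 2) * R t * Real.exp (K * t⁻¹)) hT
    · have hu := h.acu t1 T ht1 hT
      have hu' := h.acu' t1 T ht1 hT
      have hp : AbsolutelyContinuousOnInterval (fun t : ℝ => t ^ 2) t1 T :=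
        ContDiffOn.absolutelyContinuousOnInterval (by fun_prop)
      have hq : AbsolutelyContinuousOnInterval (fun t : ℝ => t) t1 T :=
        ContDiffOn.absolutelyContinuousOnInterval (by fun_prop)
      have he : AbsolutelyContinuousOnInterval (fun t : ℝ => Real.exp (K * t⁻¹)) t1 T := by
        apply ContDiffOn.absolutelyContinuousOnInterval
        rw [uIcc_of_le hT]
        intro t ht
        apply ContDiffAt.contDiffWithinAt
        have : t ≠ 0 := by linarith [ht.1]
        fun_prop (disch := assumption)
      have hu2 : AbsolutelyContinuousOnInterval (fun t => u t ^ 2) t1 T := by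
        simpa only [pow_two] using hu.fun_mul hu
      have hu2' : AbsolutelyContinuousOnInterval (fun t => u' t ^ 2) t1 T := by
        simpa only [pow_two] using hu'.fun_mul hu'
      exact ((ac_rpow ht1p hT _).fun_mul ((hp.fun_mul (hu2'.fun_add (hu2.const_mul _))).fun_add
        ((hq.fun_mul (hu.fun_mul hu')).const_mul _))).fun_mul he
    · filter_upwards [h.ddu] with t ht htm
      have htp : 0 < t := by linarith [htm.1]
      have htt : t0 < t := by linarith [htm.1]
      have d1 := h.du t htt.le
      have d2 := ht htt
      have dp : HasDerivAt (fun t : ℝ => t ^ (m - 2)) ((m - 2) * t ^ (m - 2 - 1)) t :=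
        Real.hasDerivAt_rpow_const (Or.inl htp.ne')
      have dsq : HasDerivAt (fun t : ℝ => t ^ 2) (2 * t) t := by simpa using hasDerivAt_pow 2 t
      have dR := (dsq.fun_mul ((d2.fun_pow 2).fun_add ((d1.fun_pow 2).const_mul (lam ^ 2)))).fun_add
        (((hasDerivAt_id' t).fun_mul (d1.fun_mul d2)).const_mul m)
      have de := ((hasDerivAt_inv htp.ne').const_mul K).exp
      refine ⟨_, ?_, (dp.fun_mul dR).fun_mul de⟩
      have hbt := h.hb t htt.le
      have hz : lam * t1 ≤ lam * t := mul_le_mul_of_nonneg_left htm.1.le h.lam_nn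
      have hz0 : 0 < lam * t := by positivity
      rw [show t ^ (m - 2 - 1) = t ^ (m - 2) / t by rw [Real.rpow_sub_one htp.ne']]
      have hP : 0 < t ^ (m - 2) := Real.rpow_pos_of_pos htp _
      have hX : 0 < Real.exp (K * t⁻¹) := Real.exp_pos _
      set P := t ^ (m - 2)
      set X := Real.exp (K * t⁻¹)
      set D := 2 * t * (u' t ^ 2 + lam ^ 2 * u t ^ 2)
          + t ^ 2 * (2 * u' t * (-(b t * u' t) - lam ^ 2 * u t) + lam ^ 2 * (2 * u t * u' t))
          + m * (u t * u' t + t * (u' t * u' t + u t * (-(b t * u' t) - lam ^ 2 * u t))) with hD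
      have key : (m - 2) * R t + t * D - K / t * R t ≤ 0 := by
        have e0 : (m - 2) * R t + t * D = -2 * (t * b t - m) * (t * u' t) ^ 2
            - m * (t * b t + 1 - m) * (u t * (t * u' t)) := by
          simp only [hR, hD]; ring
        have e1 : 0 ≤ (t * b t - m) * (t * u' t) ^ 2 :=
          mul_nonneg (by linarith) (sq_nonneg _)
        have eK : K / t = m * (M + 1) / (lam * t) := by rw [hK]; field_simp
        have habs : |lam * t * u t * (t * u' t)| ≤
            ((t * u' t) ^ 2 + (lam * t * u t) ^ 2) / 2 := by
          rw [abs_le]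
          constructor <;>
          nlinarith [sq_nonneg (lam * t * u t + t * u' t), sq_nonneg (lam * t * u t - t * u' t)]
        set S := (t * u' t) ^ 2 + (lam * t * u t) ^ 2 with hS
        have hS0 : 0 ≤ S := by positivity
        have habs2 : (lam * t) * |u t * (t * u' t)| ≤ S / 2 := by
          have : (lam * t) * |u t * (t * u' t)| = |lam * t * u t * (t * u' t)| := by
            rw [show lam * t * u t * (t * u' t) = (lam * t) * (u t * (t * u' t)) by ring,
              abs_mul (lam * t), abs_of_pos hz0]
          rw [this]; exact habs
        have hRS : S / 2 ≤ R t := by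
          have : R t = S + m * (u t * (t * u' t)) := by simp only [hR, hS]; ring
          rw [this]
          have h1 : -|u t * (t * u' t)| ≤ u t * (t * u' t) := neg_abs_le _
          have h2 : m * |u t * (t * u' t)| ≤ (lam * t) * |u t * (t * u' t)| :=
            mul_le_mul_of_nonneg_right (by linarith) (abs_nonneg _)
          nlinarith
        have e2 : -(m * (t * b t + 1 - m) * (u t * (t * u' t))) ≤ K / t * R t := by
          have f1 : -(u t * (t * u' t)) ≤ |u t * (t * u' t)| := neg_le_abs _
          have f2 : -(m * (t * b t + 1 - m) * (u t * (t * u' t)))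
              ≤ m * (t * b t + 1 - m) * |u t * (t * u' t)| := by
            have : 0 ≤ m * (t * b t + 1 - m) := mul_nonneg hm.le (by linarith)
            nlinarith
          have f3 : m * (t * b t + 1 - m) * |u t * (t * u' t)| ≤
              m * (M + 1) * |u t * (t * u' t)| := by
            apply mul_le_mul_of_nonneg_right _ (abs_nonneg _)
            apply mul_le_mul_of_nonneg_left _ hm.le
            linarith
          have f4 : m * (M + 1) * |u t * (t * u' t)| ≤ m * (M + 1) / (lam * t) * R t := by
            rw [div_mul_eq_mul_div, le_div_iff₀ hz0, mul_assoc]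
            apply mul_le_mul_of_nonneg_left _ (by positivity)
            linarith
          rw [eK]
          linarith
        linarith
      have := mul_nonpos_of_nonneg_of_nonpos (mul_pos (div_pos hP htp) hX).le key
      refine le_of_eq_of_le ?_ this
      simp only [hR, hD]
      push_cast
      field_simp
      ring
  have hpow : ∀ s : ℝ, 0 < s → s ^ m = s ^ (m - 2) * s ^ 2 := by
    intro s hs
    rw [← Real.rpow_natCast, ← Real.rpow_add hs]
    norm_num
  set κ := m / (2 * (lam * t1)) with hκ
  have hz1 : 0 < lam * t1 := by linarith
  have hκ0 : 0 < κ := by positivity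
  have hκ1 : κ ≤ 1 / 2 := by
    rw [hκ, div_le_iff₀ (by positivity)]; linarith
  have hκ2 : κ ≤ m / 2 := by
    rw [hκ, div_le_div_iff₀ (by positivity) (by positivity)]; nlinarith
  have hcross : ∀ t, t1 ≤ t → |m * (t * (u t * u' t))| ≤
      κ * (t ^ 2 * (u' t ^ 2 + lam ^ 2 * u t ^ 2)) := by
    intro t ht
    have htp : 0 < t := by linarith
    have hk : m = κ * (2 * (lam * t1)) := by rw [hκ]; field_simp
    have e1 : |m * (t * (u t * u' t))| = κ * (2 * (lam * t1) * (t * |u t| * |u' t|)) := by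
      rw [abs_mul, abs_mul, abs_mul, abs_of_pos hm, abs_of_pos htp]
      nth_rewrite 1 [hk]
      ring
    rw [e1]
    apply mul_le_mul_of_nonneg_left _ hκ0.le
    have e2 : 2 * (lam * t1) * (t * |u t| * |u' t|) ≤ 2 * (lam * t) * (t * |u t| * |u' t|) := by
      apply mul_le_mul_of_nonneg_right _ (by positivity)
      nlinarith
    have e3 : 0 ≤ t ^ 2 * (|u' t| - lam * |u t|) ^ 2 := by positivity
    rw [← sq_abs (u t), ← sq_abs (u' t)]
    nlinarith
  have hPT : 0 < T ^ (m - 2) := Real.rpow_pos_of_pos hTp _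
  have hP1 : 0 < t1 ^ (m - 2) := Real.rpow_pos_of_pos ht1p _
  set ET := u' T ^ 2 + lam ^ 2 * u T ^ 2 with hET
  set E1 := u' t1 ^ 2 + lam ^ 2 * u t1 ^ 2 with hE1
  have hET0 : 0 ≤ ET := by positivity
  have hE10 : 0 ≤ E1 := by positivity
  have hlow : (1 - κ) * (T ^ m * ET) ≤ T ^ (m - 2) * R T * Real.exp (K * T⁻¹) := by
    have c := hcross T hT
    have c2 := neg_abs_le (m * (T * (u T * u' T)))
    have r1 : (1 - κ) * (T ^ 2 * ET) ≤ R T := by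
      simp only [hR]; nlinarith
    have r0 : 0 ≤ (1 - κ) * (T ^ 2 * ET) := mul_nonneg (by linarith) (by positivity)
    have x1 : 1 ≤ Real.exp (K * T⁻¹) := Real.one_le_exp (by positivity)
    calc (1 - κ) * (T ^ m * ET) = T ^ (m - 2) * ((1 - κ) * (T ^ 2 * ET)) * 1 := by
          rw [hpow T hTp]; ring
      _ ≤ _ := by
        have hRT : 0 ≤ T ^ (m - 2) * R T := mul_nonneg hPT.le (r0.trans r1)
        gcongr
  have hup : t1 ^ (m - 2) * R t1 * Real.exp (K * t1⁻¹) ≤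
      (1 + κ) * (t1 ^ m * E1) * Real.exp (m * (M + 1)) := by
    have c := hcross t1 le_rfl
    have c2 := le_abs_self (m * (t1 * (u t1 * u' t1)))
    have r1 : R t1 ≤ (1 + κ) * (t1 ^ 2 * E1) := by
      simp only [hR]; nlinarith
    have x1 : K * t1⁻¹ ≤ m * (M + 1) := by
      rw [hK, ← div_eq_mul_inv, div_div, div_le_iff₀ hz1]
      have : 0 ≤ m * (M + 1) := by positivity
      nlinarith
    calc t1 ^ (m - 2) * R t1 * Real.exp (K * t1⁻¹)
        ≤ t1 ^ (m - 2) * ((1 + κ) * (t1 ^ 2 * E1)) * Real.exp (m * (M + 1)) := by gcongr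
      _ = _ := by rw [hpow t1 ht1p]; ring
  have hk3 : 1 + κ ≤ (1 - κ) * Real.exp (3 / 2 * m) := kappa_aux hκ0 hκ1 hκ2
  have hfin : (1 - κ) * (T ^ m * ET) ≤
      (1 - κ) * (Real.exp (m * (M + 5 / 2)) * (t1 ^ m * E1)) := by
    calc _ ≤ (1 + κ) * (t1 ^ m * E1) * Real.exp (m * (M + 1)) := (hlow.trans hmono).trans hup
      _ ≤ (1 - κ) * Real.exp (3 / 2 * m) * (t1 ^ m * E1) * Real.exp (m * (M + 1)) := by gcongr
      _ = _ := by
        rw [show m * (M + 5 / 2) = 3 / 2 * m + m * (M + 1) by ring, Real.exp_add]; ring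
  exact le_of_mul_le_mul_left hfin (by linarith)

lemma amgm_aux {r m : ℝ} (hr : 0 < r) (hm0 : 0 ≤ m) (hm : m ≤ 2) :
    r ^ m ≤ (1 - m / 2) * r ^ (m / 2) + m / 2 * r ^ (1 + m / 2) := by
  have h := Real.geom_mean_le_arith_mean2_weighted (w₁ := 1 - m / 2) (w₂ := m / 2)
    (p₁ := r ^ (m / 2)) (p₂ := r ^ (1 + m / 2)) (by linarith) (by linarith)
    (Real.rpow_nonneg hr.le _) (Real.rpow_nonneg hr.le _) (by ring)
  rw [← Real.rpow_mul hr.le, ← Real.rpow_mul hr.le, ← Real.rpow_add hr] at h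
  convert h using 2
  ring

/-- Bound on `|u'|` in terms of a weighted bound on `|u|`. -/
lemma Osc.du_bound {t0 m M lam S T : ℝ} {b u u' : ℝ → ℝ} (h : Osc t0 m M lam b u u')
    (hS : 0 ≤ S) (hT : t0 ≤ T) (hbd : ∀ t ∈ Icc t0 T, |u t| ≤ S * t ^ (1 - m / 2)) :
    T ^ m * |u' T| ≤ t0 ^ m * |u' t0| + lam ^ 2 * S / (2 + m / 2) * T ^ (2 + m / 2) := by
  have ht0 := h.t0_pos
  have hm := h.m_pos
  have gen : ∀ σ : ℝ, |σ| = 1 →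
      σ * (T ^ m * u' T) - (t0 ^ m * |u' t0| + lam ^ 2 * S / (2 + m / 2) * T ^ (2 + m / 2)) ≤ 0 := by
    intro σ hσ
    apply ac_nonpos_of_ae (f := fun t => σ * (t ^ m * u' t) -
      (t0 ^ m * |u' t0| + lam ^ 2 * S / (2 + m / 2) * t ^ (2 + m / 2))) hT
    · have hcst : AbsolutelyContinuousOnInterval (fun _ : ℝ => t0 ^ m * |u' t0|) t0 T :=
        ContDiffOn.absolutelyContinuousOnInterval contDiffOn_const
      exact (((ac_rpow ht0 hT _).fun_mul (h.acu' t0 T le_rfl hT)).const_mul _).fun_sub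
        (hcst.fun_add ((ac_rpow ht0 hT _).const_mul _))
    · have h1 : σ * (t0 ^ m * u' t0) ≤ t0 ^ m * |u' t0| := by
        calc σ * (t0 ^ m * u' t0) ≤ |σ * (t0 ^ m * u' t0)| := le_abs_self _
          _ = t0 ^ m * |u' t0| := by
            rw [abs_mul, abs_mul, hσ, abs_of_pos (Real.rpow_pos_of_pos ht0 _), one_mul]
      have h2 : 0 ≤ lam ^ 2 * S / (2 + m / 2) * t0 ^ (2 + m / 2) := by positivity
      linarith
    · filter_upwards [h.ddu] with t ht htm hpos
      have htp : 0 < t := by linarith [htm.1]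
      have d2 := ht htm.1
      have dp : HasDerivAt (fun t : ℝ => t ^ m) (m * t ^ (m - 1)) t :=
        Real.hasDerivAt_rpow_const (Or.inl htp.ne')
      have dq : HasDerivAt (fun t : ℝ => t ^ (2 + m / 2)) ((2 + m / 2) * t ^ (2 + m / 2 - 1)) t :=
        Real.hasDerivAt_rpow_const (Or.inl htp.ne')
      refine ⟨_, ?_, ((dp.fun_mul d2).const_mul σ).fun_sub
        ((dq.const_mul (lam ^ 2 * S / (2 + m / 2))).const_add (t0 ^ m * |u' t0|))⟩
      have hbt := (h.hb t htm.1.le).1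
      have hP : 0 < t ^ m := Real.rpow_pos_of_pos htp _
      have hsu : 0 ≤ σ * u' t := by
        have e1 : 0 ≤ t0 ^ m * |u' t0| := by positivity
        have e2 : 0 ≤ lam ^ 2 * S / (2 + m / 2) * t ^ (2 + m / 2) := by positivity
        have e3 : 0 < t ^ m * (σ * u' t) := by
          have : t ^ m * (σ * u' t) = σ * (t ^ m * u' t) := by ring
          rw [this]; linarith
        exact (pos_of_mul_pos_right e3 hP.le).le
      have hu := hbd t ⟨htm.1.le, htm.2.le⟩
      have hsu2 : -(σ * u t) ≤ S * t ^ (1 - m / 2) := by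
        calc -(σ * u t) ≤ |σ * u t| := neg_le_abs _
          _ = |u t| := by rw [abs_mul, hσ, one_mul]
          _ ≤ _ := hu
      have ep : t ^ (2 + m / 2 - 1) = t ^ m * t ^ (1 - m / 2) := by
        rw [← Real.rpow_add htp]; ring_nf
      rw [ep, Real.rpow_sub_one htp.ne']
      have e4 : lam ^ 2 * S / (2 + m / 2) * ((2 + m / 2) * (t ^ m * t ^ (1 - m / 2)))
          = lam ^ 2 * t ^ m * (S * t ^ (1 - m / 2)) := by
        field_simp
      rw [e4]
      have e5 : σ * (m * (t ^ m / t) * u' t + t ^ m * (-(b t * u' t) - lam ^ 2 * u t))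
          = -(t ^ m / t * (t * b t - m) * (σ * u' t)) + lam ^ 2 * t ^ m * (-(σ * u t)) := by
        field_simp
        ring
      rw [e5]
      have e6 : 0 ≤ t ^ m / t * (t * b t - m) * (σ * u' t) :=
        mul_nonneg (mul_nonneg (by positivity) (by linarith)) hsu
      have e7 : lam ^ 2 * t ^ m * (-(σ * u t)) ≤ lam ^ 2 * t ^ m * (S * t ^ (1 - m / 2)) :=
        mul_le_mul_of_nonneg_left hsu2 (by positivity)
      linarith
  rcases abs_cases (u' T) with ⟨h1, _⟩ | ⟨h1, _⟩ <;> rw [h1]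
  · have := gen 1 (by simp)
    linarith
  · have := gen (-1) (by simp)
    linarith

lemma Osc.u_bound {t0 m M lam S T : ℝ} {b u u' : ℝ → ℝ} (h : Osc t0 m M lam b u u')
    (hm2 : m ≤ 2)
    (hS : 0 ≤ S) (hT : t0 ≤ T) (hbd : ∀ t ∈ Icc t0 T, |u t| ≤ S * t ^ (1 - m / 2)) :
    |u T| ≤ |u t0| + |u' t0| * (t0 ^ (m / 2) * T ^ (1 - m / 2))
      + lam ^ 2 * S / 6 * T ^ (3 - m / 2) := by
  have ht0 := h.t0_pos
  have hm := h.m_pos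
  have hTp : 0 < T := by linarith
  have gen : ∀ σ : ℝ, |σ| = 1 →
      σ * u T - (|u' t0| * (t0 ^ (m / 2) * T ^ (1 - m / 2) - t0 ^ (1 + m / 2) * T ^ (-(m / 2)))
      + lam ^ 2 * S / 6 * T ^ (3 - m / 2)) ≤ |u t0| := by
    intro σ hσ
    have hdec : σ * u T - (|u' t0| * (t0 ^ (m / 2) * T ^ (1 - m / 2)
        - t0 ^ (1 + m / 2) * T ^ (-(m / 2))) + lam ^ 2 * S / 6 * T ^ (3 - m / 2)) ≤
        σ * u t0 - (|u' t0| * (t0 ^ (m / 2) * t0 ^ (1 - m / 2)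
        - t0 ^ (1 + m / 2) * t0 ^ (-(m / 2))) + lam ^ 2 * S / 6 * t0 ^ (3 - m / 2)) := by
      apply ac_le_of_ae (f := fun t => σ * u t - (|u' t0| * (t0 ^ (m / 2) * t ^ (1 - m / 2)
        - t0 ^ (1 + m / 2) * t ^ (-(m / 2))) + lam ^ 2 * S / 6 * t ^ (3 - m / 2))) hT
      · exact ((h.acu t0 T le_rfl hT).const_mul _).fun_sub
          (((((ac_rpow ht0 hT _).const_mul _).fun_sub ((ac_rpow ht0 hT _).const_mul _)).const_mul
            _).fun_add ((ac_rpow ht0 hT _).const_mul _))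
      · refine Filter.Eventually.of_forall fun t htm => ?_
        have htp : 0 < t := by linarith [htm.1]
        have d1 := h.du t htm.1.le
        have dq : ∀ p : ℝ, HasDerivAt (fun t : ℝ => t ^ p) (p * t ^ (p - 1)) t := fun p =>
          Real.hasDerivAt_rpow_const (Or.inl htp.ne')
        refine ⟨_, ?_, (d1.const_mul σ).fun_sub
          (((((dq (1 - m / 2)).const_mul (t0 ^ (m / 2))).fun_sub
            ((dq (-(m / 2))).const_mul (t0 ^ (1 + m / 2)))).const_mul |u' t0|).fun_add
            ((dq (3 - m / 2)).const_mul (lam ^ 2 * S / 6)))⟩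
        have hdu := h.du_bound hS htm.1.le
          (fun s hs => hbd s ⟨hs.1, hs.2.trans htm.2.le⟩)
        have hP : 0 < t ^ m := Real.rpow_pos_of_pos htp _
        have hsu : σ * u' t ≤ |u' t| := by
          calc σ * u' t ≤ |σ * u' t| := le_abs_self _
            _ = |u' t| := by rw [abs_mul, hσ, one_mul]
        have am := amgm_aux (r := t0 / t) (by positivity) hm.le hm2
        rw [Real.div_rpow ht0.le htp.le, Real.div_rpow ht0.le htp.le,
          Real.div_rpow ht0.le htp.le] at am
        have e1 : t ^ (1 - m / 2 - 1) = (t ^ (m / 2))⁻¹ := by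
          rw [← Real.rpow_neg htp.le]; ring_nf
        have e2 : t ^ (-(m / 2) - 1) = (t ^ (1 + m / 2))⁻¹ := by
          rw [← Real.rpow_neg htp.le]; ring_nf
        have e3 : t ^ (2 + m / 2) = t ^ m * t ^ (3 - m / 2 - 1) := by
          rw [← Real.rpow_add htp]; ring_nf
        rw [e1, e2]
        set Y := t ^ (3 - m / 2 - 1) with hY
        have hY0 : 0 ≤ Y := Real.rpow_nonneg htp.le _
        have h1 : |u' t| ≤ t0 ^ m / t ^ m * |u' t0| + lam ^ 2 * S / (2 + m / 2) * Y := by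
          rw [e3] at hdu
          refine le_of_mul_le_mul_left ?_ hP
          refine hdu.trans (le_of_eq ?_)
          field_simp
        have h2 : lam ^ 2 * S / (2 + m / 2) * Y ≤ lam ^ 2 * S / 6 * ((3 - m / 2) * Y) := by
          have : lam ^ 2 * S / (2 + m / 2) ≤ lam ^ 2 * S / 6 * (3 - m / 2) := by
            rw [div_le_iff₀ (by positivity)]
            have : 0 ≤ lam ^ 2 * S := by positivity
            have h6 : 0 ≤ (3 - m / 2) * (2 + m / 2) - 6 := by nlinarith
            nlinarith [mul_nonneg this h6]
          nlinarith
        have h3 := mul_le_mul_of_nonneg_right am (abs_nonneg (u' t0))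
        have h4 : |u' t0| * (t0 ^ (m / 2) * ((1 - m / 2) * (t ^ (m / 2))⁻¹)
            - t0 ^ (1 + m / 2) * (-(m / 2) * (t ^ (1 + m / 2))⁻¹)) =
            ((1 - m / 2) * (t0 ^ (m / 2) / t ^ (m / 2))
              + m / 2 * (t0 ^ (1 + m / 2) / t ^ (1 + m / 2))) * |u' t0| := by
          rw [div_eq_mul_inv, div_eq_mul_inv]; ring
        rw [h4]
        linarith
    have hz : t0 ^ (m / 2) * t0 ^ (1 - m / 2) - t0 ^ (1 + m / 2) * t0 ^ (-(m / 2)) = 0 := by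
      rw [← Real.rpow_add ht0, ← Real.rpow_add ht0]; ring_nf
    rw [hz] at hdec
    have h1 : σ * u t0 ≤ |u t0| := by
      calc σ * u t0 ≤ |σ * u t0| := le_abs_self _
        _ = |u t0| := by rw [abs_mul, hσ, one_mul]
    have h2 : 0 ≤ lam ^ 2 * S / 6 * t0 ^ (3 - m / 2) := by positivity
    linarith
  have hneg : 0 ≤ |u' t0| * (t0 ^ (1 + m / 2) * T ^ (-(m / 2))) := by positivity
  rcases abs_cases (u T) with ⟨h1, _⟩ | ⟨h1, _⟩ <;> rw [h1]
  · have := gen 1 (by simp)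
    linarith
  · have := gen (-1) (by simp)
    linarith

set_option maxHeartbeats 1000000 in
lemma Osc.low_big {t0 m M lam T : ℝ} {b u u' : ℝ → ℝ} (h : Osc t0 m M lam b u u')
    (hm1 : 1 ≤ m) (hm2 : m ≤ 2) (hT : t0 ≤ T) (hlT : lam * T ≤ 2) :
    T ^ m * (u' T ^ 2 + lam ^ 2 * u T ^ 2) ≤
      60 * (t0 ^ m * (4 * u' t0 ^ 2 + (lam ^ 2 + 2 / t0 ^ 2) * u t0 ^ 2)) := by
  have ht0 := h.t0_pos
  have hm := h.m_pos
  have hTp : 0 < T := by linarith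
  have hcont : ContinuousOn (fun t => |u t| * t ^ (m / 2 - 1)) (Icc t0 T) := by
    intro t ht
    have htp : 0 < t := by linarith [ht.1]
    exact ((h.du t ht.1).continuousAt.abs.mul
      (Real.continuousAt_rpow_const _ _ (Or.inl htp.ne'))).continuousWithinAt
  obtain ⟨τ, hτ, hmax⟩ := isCompact_Icc.exists_isMaxOn ⟨t0, left_mem_Icc.mpr hT⟩ hcont
  have hτp : 0 < τ := by linarith [hτ.1]
  set S := |u τ| * τ ^ (m / 2 - 1) with hSdef
  have hS : 0 ≤ S := by positivity
  have hinv : ∀ t : ℝ, 0 < t → t ^ (m / 2 - 1) * t ^ (1 - m / 2) = 1 := by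
    intro t ht
    rw [← Real.rpow_add ht]; ring_nf; simp
  have hbd : ∀ t ∈ Icc t0 T, |u t| ≤ S * t ^ (1 - m / 2) := by
    intro t ht
    have htp : 0 < t := by linarith [ht.1]
    have h1 : |u t| * t ^ (m / 2 - 1) ≤ S := hmax ht
    calc |u t| = |u t| * t ^ (m / 2 - 1) * t ^ (1 - m / 2) := by
          rw [mul_assoc, hinv t htp, mul_one]
      _ ≤ _ := mul_le_mul_of_nonneg_right h1 (Real.rpow_nonneg htp.le _)
  have hSτ : |u τ| = S * τ ^ (1 - m / 2) := by
    rw [hSdef, mul_assoc, hinv τ hτp, mul_one]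
  have hub := h.u_bound hm2 hS hτ.1 (fun t ht => hbd t ⟨ht.1, ht.2.trans hτ.2⟩)
  have hdu := h.du_bound hS hT hbd
  have huT := hbd T ⟨hT, le_rfl⟩
  set G := t0 ^ (m / 2) with hG
  have hG0 : 0 < G := Real.rpow_pos_of_pos ht0 _
  set A := |u' t0| with hA
  set B := |u t0| / t0 with hB
  have hA0 : 0 ≤ A := abs_nonneg _
  have hB0 : 0 ≤ B := by positivity
  have hzτ : (lam * τ) ^ 2 ≤ 4 := by
    have h1 : 0 ≤ lam * τ := mul_nonneg h.lam_nn hτp.le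
    have h2 : lam * τ ≤ 2 := (mul_le_mul_of_nonneg_left hτ.2 h.lam_nn).trans hlT
    nlinarith
  have hzT0 : 0 ≤ lam * T := mul_nonneg h.lam_nn hTp.le
  have hS3 : S ≤ 3 * (G * (A + B)) := by
    have hq : 0 < τ ^ (1 - m / 2) := Real.rpow_pos_of_pos hτp _
    have e1 : τ ^ (3 - m / 2) = τ ^ 2 * τ ^ (1 - m / 2) := by
      rw [← Real.rpow_natCast, ← Real.rpow_add hτp]; push_cast; ring_nf
    have e2 : |u t0| ≤ G * B * τ ^ (1 - m / 2) := by
      have f1 : t0 ^ (1 - m / 2) ≤ τ ^ (1 - m / 2) :=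
        Real.rpow_le_rpow ht0.le hτ.1 (by linarith)
      have f2 : G * t0 ^ (1 - m / 2) = t0 := by
        rw [hG, ← Real.rpow_add ht0]; ring_nf; simp
      calc |u t0| = B * t0 := by rw [hB]; field_simp
        _ = G * B * t0 ^ (1 - m / 2) := by nth_rewrite 1 [← f2]; ring
        _ ≤ _ := by gcongr
    rw [hSτ, e1] at hub
    have e3 : lam ^ 2 * S / 6 * (τ ^ 2 * τ ^ (1 - m / 2)) ≤ 4 / 6 * S * τ ^ (1 - m / 2) := by
      have : lam ^ 2 * S / 6 * (τ ^ 2 * τ ^ (1 - m / 2))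
        = (lam * τ) ^ 2 / 6 * S * τ ^ (1 - m / 2) := by ring
      rw [this]
      gcongr
    have e4 : (S / 3) * τ ^ (1 - m / 2) ≤ (G * (A + B)) * τ ^ (1 - m / 2) := by nlinarith
    have := le_of_mul_le_mul_right e4 hq
    linarith
  have hH0 : 0 < T ^ (m / 2) := Real.rpow_pos_of_pos hTp _
  have hGH : G ≤ T ^ (m / 2) := Real.rpow_le_rpow ht0.le hT (by linarith)
  set H := T ^ (m / 2) with hH
  have hsqG : t0 ^ m = G ^ 2 := by
    rw [hG, ← Real.rpow_natCast, ← Real.rpow_mul ht0.le]; push_cast; ring_nf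
  have hsqH : T ^ m = H ^ 2 := by
    rw [hH, ← Real.rpow_natCast, ← Real.rpow_mul hTp.le]; push_cast; ring_nf
  have hD : H * |u' T| ≤ G * (29 / 5 * A + 24 / 5 * B) := by
    have e1 : T ^ (2 + m / 2) = T ^ 2 * H := by
      rw [hH, ← Real.rpow_natCast, ← Real.rpow_add hTp]; norm_num
    rw [hsqG, hsqH, e1] at hdu
    have e2 : lam ^ 2 * S / (2 + m / 2) * (T ^ 2 * H) ≤ H * (8 / 5 * S) := by
      have f1 : (lam * T) ^ 2 ≤ 4 := by nlinarith
      have f2 : lam ^ 2 * S / (2 + m / 2) * (T ^ 2 * H)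
          = (lam * T) ^ 2 * S / (2 + m / 2) * H := by field_simp
      rw [f2, mul_comm H]
      apply mul_le_mul_of_nonneg_right _ hH0.le
      rw [div_le_iff₀ (by positivity)]
      have g1 := mul_le_mul_of_nonneg_right f1 hS
      have g2 := mul_le_mul_of_nonneg_right hm1 hS
      linarith
    have e3 : G ^ 2 * A ≤ H * (G * A) := by
      have : G * (G * A) ≤ H * (G * A) := mul_le_mul_of_nonneg_right hGH (by positivity)
      linarith
    have e4 : H * (H * |u' T|) ≤ H * (G * A + 8 / 5 * S) := by linarith
    have e5 := le_of_mul_le_mul_left e4 hH0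
    linarith
  have hU : H * (lam * |u T|) ≤ 6 * (G * (A + B)) := by
    have e1 : H * T ^ (1 - m / 2) = T := by
      rw [hH, ← Real.rpow_add hTp]; ring_nf; simp
    calc H * (lam * |u T|) ≤ H * (lam * (S * T ^ (1 - m / 2))) := by
          have := h.lam_nn
          gcongr
      _ = (lam * (H * T ^ (1 - m / 2))) * S := by ring
      _ = (lam * T) * S := by rw [e1]
      _ ≤ 2 * (3 * (G * (A + B))) := by gcongr
      _ = _ := by ring
  have hD2 : (H * |u' T|) ^ 2 ≤ (G * (29 / 5 * A + 24 / 5 * B)) ^ 2 := by gcongr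
  have hU2 : (H * (lam * |u T|)) ^ 2 ≤ (6 * (G * (A + B))) ^ 2 := by
    have := h.lam_nn
    gcongr
  have hL : T ^ m * (u' T ^ 2 + lam ^ 2 * u T ^ 2)
      = (H * |u' T|) ^ 2 + (H * (lam * |u T|)) ^ 2 := by
    rw [hsqH, mul_pow, mul_pow, mul_pow, sq_abs, sq_abs]; ring
  have hRR : t0 ^ m * (4 * u' t0 ^ 2 + (lam ^ 2 + 2 / t0 ^ 2) * u t0 ^ 2)
      = G ^ 2 * (4 * A ^ 2 + 2 * B ^ 2) + G ^ 2 * (lam ^ 2 * u t0 ^ 2) := by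
    rw [hsqG, hA, hB, div_pow, sq_abs, sq_abs]
    field_simp
    ring
  rw [hL, hRR]
  have hx : 0 ≤ G ^ 2 * (lam ^ 2 * u t0 ^ 2) := by positivity
  have hfin : (29 / 5 * A + 24 / 5 * B) ^ 2 + (6 * (A + B)) ^ 2 ≤ 60 * (4 * A ^ 2 + 2 * B ^ 2) := by
    nlinarith [sq_nonneg (A - B), sq_nonneg A, sq_nonneg B]
  have hfin2 := mul_le_mul_of_nonneg_left hfin (sq_nonneg G)
  linarith

lemma Osc.main {t0 m M lam T : ℝ} {b u u' : ℝ → ℝ} (h : Osc t0 m M lam b u u')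
    (hm2 : m ≤ 2) (hT : t0 ≤ T) :
    T ^ m * (u' T ^ 2 + lam ^ 2 * u T ^ 2) ≤
      Real.exp (m * (M + 8)) *
        (t0 ^ m * (4 * u' t0 ^ 2 + (lam ^ 2 + 2 / t0 ^ 2) * u t0 ^ 2)) := by
  have ht0 := h.t0_pos
  have hm := h.m_pos
  have hM : 0 < M := hm.trans_le h.mM
  set Z := t0 ^ m * (4 * u' t0 ^ 2 + (lam ^ 2 + 2 / t0 ^ 2) * u t0 ^ 2) with hZ
  have hZ0 : 0 ≤ Z := by positivity
  obtain ⟨c, C, hc1, hcm, hC1, hC, hlow⟩ : ∃ c C : ℝ, 1 ≤ c ∧ m ≤ c ∧ 1 ≤ C ∧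
      C ≤ Real.exp (m * (11 / 2)) ∧ ∀ t, t0 ≤ t → lam * t ≤ c →
      t ^ m * (u' t ^ 2 + lam ^ 2 * u t ^ 2) ≤ C * Z := by
    rcases le_total m 1 with hm1 | hm1
    · refine ⟨1, 1, le_rfl, hm1, le_rfl, Real.one_le_exp (by positivity), fun t ht hl => ?_⟩
      rw [one_mul]
      exact h.low_small hm1 ht hl
    · refine ⟨2, 60, by norm_num, hm2, by norm_num, ?_, fun t ht hl => h.low_big hm1 hm2 ht hl⟩
      have h1 : Real.exp 5 ≤ Real.exp (m * (11 / 2)) := Real.exp_le_exp.mpr (by linarith)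
      have h2 : Real.exp 5 = Real.exp 1 ^ 5 := by rw [← Real.exp_nat_mul]; norm_num
      have h3 : (2.7 : ℝ) ^ 5 ≤ Real.exp 1 ^ 5 := by
        have := Real.exp_one_gt_d9
        gcongr
        linarith
      norm_num at h3 ⊢
      linarith
  have hC0 : 0 ≤ C := by linarith
  have hsplit : Real.exp (m * (M + 8)) = Real.exp (m * (M + 5 / 2)) * Real.exp (m * (11 / 2)) := by
    rw [← Real.exp_add]; ring_nf
  have hexp1 : 1 ≤ Real.exp (m * (M + 5 / 2)) := Real.one_le_exp (by positivity)
  rcases le_total (lam * T) c with hc | hc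
  · calc _ ≤ C * Z := hlow T hT hc
      _ ≤ 1 * Real.exp (m * (11 / 2)) * Z := by rw [one_mul]; gcongr
      _ ≤ Real.exp (m * (M + 8)) * Z := by rw [hsplit]; gcongr
  · obtain ⟨t1, h01, h1T, hl1, hE⟩ : ∃ t1, t0 ≤ t1 ∧ t1 ≤ T ∧ c ≤ lam * t1 ∧
        t1 ^ m * (u' t1 ^ 2 + lam ^ 2 * u t1 ^ 2) ≤ C * Z := by
      rcases le_total (lam * t0) c with h0 | h0
      · have hlam : 0 < lam := by
          rcases h.lam_nn.eq_or_lt with hh | hh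
          · rw [← hh] at hc; linarith
          · exact hh
        have e : lam * (c / lam) = c := by field_simp
        have h01 : t0 ≤ c / lam := by rw [le_div_iff₀ hlam]; linarith
        refine ⟨c / lam, h01, ?_, e.ge, hlow _ h01 e.le⟩
        rw [div_le_iff₀ hlam]; linarith
      · refine ⟨t0, le_rfl, hT, h0, ?_⟩
        have : t0 ^ m * (u' t0 ^ 2 + lam ^ 2 * u t0 ^ 2) ≤ Z := by
          rw [hZ]
          have e1 : 0 ≤ 2 / t0 ^ 2 * u t0 ^ 2 := by positivity
          refine mul_le_mul_of_nonneg_left ?_ (Real.rpow_nonneg ht0.le _)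
          nlinarith [sq_nonneg (u' t0)]
        nlinarith
    calc _ ≤ _ := h.high h01 h1T (hc1.trans hl1) (hcm.trans hl1)
      _ ≤ Real.exp (m * (M + 5 / 2)) * (Real.exp (m * (11 / 2)) * Z) := by
        apply mul_le_mul_of_nonneg_left _ (Real.exp_pos _).le
        exact hE.trans (mul_le_mul_of_nonneg_right hC hZ0)
      _ = _ := by rw [hsplit]; ring

theorem decay_general_oscillations_PDE
    {X : Type*} [MeasurableSpace X] (μ : Measure X)
    (t0 m M : ℝ) (ht0 : 0 < t0) (hm : 0 < m) (hmM : m ≤ M)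
    (Λ : X → ℝ) (hΛmeas : Measurable Λ) (hΛpos : ∀ ξ, 0 ≤ Λ ξ)
    (b : ℝ → ℝ) (hbmeas : Measurable b)
    (hb : ∀ t ≥ t0, m / t ≤ b t ∧ b t ≤ M / t)
    (u u' : ℝ → X → ℝ)
    (hsol : ∀ ξ, IsDampedSol t0 b (Λ ξ) (fun t => u t ξ) (fun t => u' t ξ))
    (hmeas : ∀ t ≥ t0, Measurable (u t) ∧ Measurable (u' t)) :
    ∀ t ≥ t0,
      (∫⁻ ξ, ENNReal.ofReal (u' t ξ ^ 2 + Λ ξ ^ 2 * u t ξ ^ 2) ∂μ) ≤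
        ENNReal.ofReal (Real.exp (m * (M + 8))) *
          (∫⁻ ξ, ENNReal.ofReal
            (4 * u' t0 ξ ^ 2 + (Λ ξ ^ 2 + 2 / t0 ^ 2) * u t0 ξ ^ 2) ∂μ) *
          ENNReal.ofReal ((t0 / t) ^ (min m 2)) := by

  intro t ht
  have htp : 0 < t := by linarith
  have hM : 0 < M := hm.trans_le hmM
  have hpt : ∀ ξ, ENNReal.ofReal (u' t ξ ^ 2 + Λ ξ ^ 2 * u t ξ ^ 2) ≤
      (ENNReal.ofReal (Real.exp (m * (M + 8))) * ENNReal.ofReal ((t0 / t) ^ (min m 2))) *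
        ENNReal.ofReal (4 * u' t0 ξ ^ 2 + (Λ ξ ^ 2 + 2 / t0 ^ 2) * u t0 ξ ^ 2) := by
    intro ξ
    have hO := osc_of_sol ht0 hm hmM (hΛpos ξ) hb (hsol ξ)
    have hmain := hO.main (min_le_right _ _) ht
    rw [← ENNReal.ofReal_mul (Real.exp_pos _).le,
      ← ENNReal.ofReal_mul (by positivity)]
    apply ENNReal.ofReal_le_ofReal
    have hP : 0 < t ^ (min m 2) := Real.rpow_pos_of_pos htp _
    have hexp : Real.exp (min m 2 * (M + 8)) ≤ Real.exp (m * (M + 8)) := by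
      apply Real.exp_le_exp.mpr
      exact mul_le_mul_of_nonneg_right (min_le_left _ _) (by linarith)
    rw [Real.div_rpow ht0.le htp.le]
    refine le_of_mul_le_mul_left ?_ hP
    refine (hmain.trans (mul_le_mul_of_nonneg_right hexp (by positivity))).trans (le_of_eq ?_)
    field_simp
  calc _ ≤ ∫⁻ ξ, (ENNReal.ofReal (Real.exp (m * (M + 8))) *
        ENNReal.ofReal ((t0 / t) ^ (min m 2))) *
        ENNReal.ofReal (4 * u' t0 ξ ^ 2 + (Λ ξ ^ 2 + 2 / t0 ^ 2) * u t0 ξ ^ 2) ∂μ :=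
        lintegral_mono hpt
    _ = _ := by
      rw [lintegral_const_mul' _ _ (ENNReal.mul_ne_top ENNReal.ofReal_ne_top ENNReal.ofReal_ne_top)]
      ring
end

section
/- Let t0 > 0, let (X, μ) be a measure space, let Λ : X → [0,∞) be measurable, and let b(t) := (a + r·sin(t^α))/t for t ≥ t0, where a > 0, 0 ≤ r ≤ a and α > 1. Set μ0 := min{a, 2}, B := 3r/(α·t0^α), and Γ2 := exp( a(a+r+8) + 5r(a+r+4)/2 + 3r/(α·t0^α) + r·log 3/(α−1) ). Let u : [t0,∞) × X → ℝ be such that for every ξ ∈ X the function t ↦ u(t,ξ) is a solution of the damped oscillator equation u'' + b(t)u' + Λ(ξ)²u = 0, and such that for each t ≥ t0 the functions ξ ↦ u(t,ξ) and ξ ↦ ∂_t u(t,ξ) are measurable. Then for every t ≥ t0 one has ∫_X [ (∂_t u(t,ξ))² + Λ(ξ)²·u(t,ξ)² ] dμ(ξ) ≤ Γ2 · ( ∫_X [ 4e^{2B}(∂_t u(t0,ξ))² + (Λ(ξ)² + 2/t0²)·u(t0,ξ)² ] dμ(ξ) ) · (t0/t)^{μ0}. -/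
open Real Set Filter MeasureTheory intervalIntegral

lemma daf_mono (f f' : ℝ → ℝ) (s T : ℝ) (hsT : s ≤ T) (hc : ContinuousOn f (Icc s T))
    (hd : ∀ t ∈ Ioo s T, HasDerivAt f (f' t) t) (hn : ∀ t ∈ Ioo s T, f' t ≤ 0) : f T ≤ f s := by
  have h := antitoneOn_of_hasDerivWithinAt_nonpos (convex_Icc s T) hc (f' := f')
    (by intro x hx; rw [interior_Icc] at hx ⊢; exact (hd x hx).hasDerivWithinAt)
    (by intro x hx; rw [interior_Icc] at hx; exact hn x hx)
  exact h (left_mem_Icc.2 hsT) (right_mem_Icc.2 hsT) hsT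

lemma daf_b_cont (t0 a r α : ℝ) (ht0 : 0 < t0) :
    ContinuousOn (fun t : ℝ => (a + r * Real.sin (t ^ α)) / t) (Ici t0) := by
  intro t ht
  have h0 : t ≠ 0 := (lt_of_lt_of_le ht0 ht).ne'
  apply ContinuousAt.continuousWithinAt
  have := Real.continuousAt_rpow_const t α (Or.inl h0)
  fun_prop (disch := assumption)

lemma daf_sol_deriv (t0 l : ℝ) (b u v : ℝ → ℝ) (hb : ContinuousOn b (Ici t0))
    (h : IsDampedSol t0 b l u v) (t : ℝ) (ht : t0 < t) :
    HasDerivAt v (-(b t * v t) - l ^ 2 * u t) t := by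
  obtain ⟨hu, hvc, w, hw, hv, hae⟩ := h
  have huc : ContinuousOn u (Ici t0) := fun x hx => (hu x hx).continuousAt.continuousWithinAt
  set F : ℝ → ℝ := fun t => -(b t * v t) - l ^ 2 * u t with hF
  have hFc : ContinuousOn F (Ici t0) := by fun_prop
  have heq : ∀ x ∈ Ici t0, v x = v t0 + ∫ s in t0..x, F s := by
    intro x hx
    rw [hv x hx]
    congr 1
    apply intervalIntegral.integral_congr_ae
    rw [ae_restrict_iff' measurableSet_Ici] at hae
    filter_upwards [hae] with y hy hy2
    rw [uIoc_of_le hx] at hy2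
    have := hy (le_of_lt hy2.1)
    simp only [hF]; linarith
  have hd : HasDerivAt (fun x => v t0 + ∫ s in t0..x, F s) (F t) t := by
    apply HasDerivAt.const_add
    apply intervalIntegral.integral_hasDerivAt_right
    · apply ContinuousOn.intervalIntegrable
      apply hFc.mono
      rw [uIcc_of_le ht.le]; exact Icc_subset_Ici_self
    · exact (hFc.mono Ioi_subset_Ici_self).stronglyMeasurableAtFilter isOpen_Ioi t ht
    · exact hFc.continuousAt (Ici_mem_nhds ht)
  apply hd.congr_of_eventuallyEq
  filter_upwards [Ici_mem_nhds ht] with x hx using heq x hx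

/-- `Q` piece -/
lemma daf_Q_deriv (a r α t : ℝ) (hr0 : 0 ≤ r) (hα : 1 < α) (ht : 0 < t) :
    ∃ d, HasDerivAt (fun t : ℝ => a * Real.log t + r * (1 - Real.cos (t ^ α)) * (t ^ (-α) / α)) d t ∧
      d ≤ (a + r * Real.sin (t ^ α)) / t := by
  have h1 : HasDerivAt (fun t : ℝ => t ^ α) (α * t ^ (α - 1)) t :=
    Real.hasDerivAt_rpow_const (Or.inl ht.ne')
  have h2 : HasDerivAt (fun t : ℝ => t ^ (-α)) (-α * t ^ (-α - 1)) t :=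
    Real.hasDerivAt_rpow_const (Or.inl ht.ne')
  have h3 := (((Real.hasDerivAt_log ht.ne').const_mul a).add
    (((h1.cos.const_sub 1).const_mul r).mul (h2.div_const α)))
  refine ⟨_, h3, ?_⟩
  have e1 : t ^ (α - 1) * t ^ (-α) = 1 / t := by
    rw [← Real.rpow_add ht, show α - 1 + -α = -1 by ring, Real.rpow_neg_one, one_div]
  have e2 : 0 ≤ t ^ (-α - 1) := by positivity
  have hc : Real.cos (t ^ α) ≤ 1 := Real.cos_le_one _
  have hα0 : α ≠ 0 := by positivity
  have e3 : (a + r * Real.sin (t ^ α)) / t = a * t⁻¹ + r * Real.sin (t ^ α) * (t ^ (α - 1) * t ^ (-α)) := by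
    rw [e1]; field_simp
  rw [e3]
  have e4 : 0 ≤ r * (1 - Real.cos (t ^ α)) * t ^ (-α - 1) :=
    mul_nonneg (mul_nonneg hr0 (by linarith)) e2
  have e5 : -α * t ^ (-α - 1) / α = - t ^ (-α - 1) := by field_simp
  have e6 : r * -(-Real.sin (t ^ α) * (α * t ^ (α - 1))) * (t ^ (-α) / α) =
     r * Real.sin (t ^ α) * (t ^ (α - 1) * t ^ (-α)) := by field_simp
  rw [e5, e6]
  linarith

lemma daf_Q_bound (a r α s T : ℝ) (hr0 : 0 ≤ r) (hα : 1 < α) (hs : 0 < s) (hsT : s ≤ T) :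
    (a * Real.log s + r * (1 - Real.cos (s ^ α)) * (s ^ (-α) / α)) + a * Real.log (T / s)
      - 2 * r / (α * s ^ α) ≤
    (a * Real.log T + r * (1 - Real.cos (T ^ α)) * (T ^ (-α) / α)) := by
  have hT : 0 < T := by linarith
  rw [Real.log_div hT.ne' hs.ne']
  have h1 : 0 ≤ r * (1 - Real.cos (T ^ α)) * (T ^ (-α) / α) := by
    have := Real.cos_le_one (T ^ α)
    have : 0 ≤ 1 - Real.cos (T ^ α) := by linarith
    positivity
  have h2 : r * (1 - Real.cos (s ^ α)) * (s ^ (-α) / α) ≤ 2 * r / (α * s ^ α) := by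
    have h3 := Real.neg_one_le_cos (s ^ α)
    have : s ^ (-α) / α = 1 / (α * s ^ α) := by
      rw [Real.rpow_neg hs.le]; field_simp
    rw [this, div_eq_mul_one_div (2 * r)]
    apply mul_le_mul_of_nonneg_right
    · nlinarith
    · positivity
  linarith

lemma daf_h_deriv (α m t : ℝ) (hα : 1 < α) (ht : 0 < t) (hne : α * t ^ (α - 1) - m ≠ 0) :
    HasDerivAt (fun t : ℝ => 1 / (t * (α * t ^ (α - 1) - m)))
      (-(1 / (t ^ 2 * (α * t ^ (α - 1) - m))) -
        (α * ((α - 1) * t ^ (α - 1 - 1))) / (t * (α * t ^ (α - 1) - m) ^ 2)) t := by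
  have h1 : HasDerivAt (fun t : ℝ => t ^ (α - 1)) ((α - 1) * t ^ (α - 1 - 1)) t :=
    Real.hasDerivAt_rpow_const (Or.inl ht.ne')
  have h2 := ((hasDerivAt_id t).mul ((h1.const_mul α).sub_const m))
  have h3 := (hasDerivAt_const t (1 : ℝ)).div h2 (mul_ne_zero ht.ne' hne)
  refine HasDerivAt.congr_deriv h3 ?_
  simp only [id, Pi.mul_apply]
  generalize α * t ^ (α - 1) - m = z at *
  field_simp
  ring

/-- phase piece -/
lemma daf_phase_deriv (α m t bt h' k' : ℝ) (f g h k : ℝ → ℝ) (ht : 0 < t)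
    (hf : HasDerivAt f (-(m + bt * g t) * g t) t) (hg : HasDerivAt g ((m + bt * g t) * f t) t)
    (hfg : f t ^ 2 + g t ^ 2 = 1)
    (hh : HasDerivAt h h' t) (hk : HasDerivAt k k' t)
    (hhp : h t * (α * t ^ (α - 1) - m) = 1 / t)
    (hle : |h'| + |h t| * |bt| ≤ -k') :
    ∃ d, HasDerivAt (fun t : ℝ => -(h t * (Real.cos (t ^ α) * f t + Real.sin (t ^ α) * g t)) + k t) d t ∧
      d ≤ (Real.sin (t ^ α) * f t - Real.cos (t ^ α) * g t) / t := by
  have h1 : HasDerivAt (fun t : ℝ => t ^ α) (α * t ^ (α - 1)) t :=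
    Real.hasDerivAt_rpow_const (Or.inl ht.ne')
  have h3 := ((hh.mul ((h1.cos.mul hf).add (h1.sin.mul hg))).neg.add hk)
  refine ⟨_, h3, ?_⟩
  try simp only [Pi.add_apply, Pi.mul_apply]
  have hsc := Real.sin_sq_add_cos_sq (t ^ α)
  generalize α * t ^ (α - 1) = p at *
  generalize Real.sin (t ^ α) = S at *
  generalize Real.cos (t ^ α) = C at *
  generalize f t = x at *
  generalize g t = y at *
  generalize h t = z at *
  have e1 : |C * x + S * y| ≤ 1 := by
    rw [abs_le_one_iff_mul_self_le_one]; nlinarith [sq_nonneg (S * x - C * y)]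
  have e2 : |S * x - C * y| ≤ 1 := by
    rw [abs_le_one_iff_mul_self_le_one]; nlinarith [sq_nonneg (C * x + S * y)]
  have e3 : |y| ≤ 1 := by
    rw [abs_le_one_iff_mul_self_le_one]; nlinarith [sq_nonneg x]
  have i1 : -(h' * (C * x + S * y)) ≤ |h'| := by
    have : |h' * (C * x + S * y)| ≤ |h'| := by
      rw [abs_mul]; exact mul_le_of_le_one_right (abs_nonneg _) e1
    linarith [neg_abs_le (h' * (C * x + S * y))]
  have i2 : -(z * bt * (y * (S * x - C * y))) ≤ |z| * |bt| := by
    have : |z * bt * (y * (S * x - C * y))| ≤ |z| * |bt| := by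
      rw [abs_mul, abs_mul z]
      apply mul_le_of_le_one_right (by positivity)
      rw [abs_mul]
      exact mul_le_one₀ e3 (abs_nonneg _) e2
    linarith [neg_abs_le (z * bt * (y * (S * x - C * y)))]
  rw [div_eq_mul_one_div, ← hhp]
  linarith

lemma daf_C_bound (α t : ℝ) (f g : ℝ → ℝ) (hfg : f t ^ 2 + g t ^ 2 = 1) (z : ℝ) :
    |z * (Real.cos (t ^ α) * f t + Real.sin (t ^ α) * g t)| ≤ |z| := by
  have hsc := Real.sin_sq_add_cos_sq (t ^ α)
  rw [abs_mul]
  apply mul_le_of_le_one_right (by positivity)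
  rw [abs_le_one_iff_mul_self_le_one]
  nlinarith [sq_nonneg (Real.sin (t ^ α) * f t - Real.cos (t ^ α) * g t)]

lemma daf_p_deriv (α t : ℝ) (ht : 0 < t) :
    HasDerivAt (fun t : ℝ => α * t ^ (α - 1)) (α * ((α - 1) * t ^ (α - 1 - 1))) t :=
  (Real.hasDerivAt_rpow_const (Or.inl ht.ne')).const_mul α

lemma daf_p_mono (α s t : ℝ) (hα : 1 < α) (hs : 0 < s) (hst : s ≤ t) :
    α * s ^ (α - 1) ≤ α * t ^ (α - 1) := by
  apply mul_le_mul_of_nonneg_left _ (by linarith)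
  exact Real.rpow_le_rpow hs.le hst (by linarith)

lemma daf_inv_deriv (c t : ℝ) (ht : 0 < t) :
    HasDerivAt (fun t : ℝ => c / t) (-(c / t ^ 2)) t := by
  have := (hasDerivAt_inv ht.ne').const_mul c
  refine HasDerivAt.congr_deriv this ?_
  field_simp

/-- zone III and the non-resonant phase: monotone `h`. -/
lemma daf_phase_mono (a r α m κ t : ℝ) (f g : ℝ → ℝ) (ht : 0 < t)
    (ha : 0 < a) (hr0 : 0 ≤ r) (hα : 1 < α) (hκ : 0 < κ)
    (hpm : κ ≤ α * t ^ (α - 1) - m)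
    (hf : HasDerivAt f (-(m + (a + r * Real.sin (t ^ α)) / t * g t) * g t) t)
    (hg : HasDerivAt g ((m + (a + r * Real.sin (t ^ α)) / t * g t) * f t) t)
    (hfg : f t ^ 2 + g t ^ 2 = 1) (hb : |(a + r * Real.sin (t ^ α)) / t| ≤ (a + r) / t) :
    ∃ d, HasDerivAt (fun t : ℝ => -(1 / (t * (α * t ^ (α - 1) - m)) *
        (Real.cos (t ^ α) * f t + Real.sin (t ^ α) * g t)) +
        (1 / (t * (α * t ^ (α - 1) - m)) + ((a + r) / κ) / t)) d t ∧
      d ≤ (Real.sin (t ^ α) * f t - Real.cos (t ^ α) * g t) / t := by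
  have hz : 0 < α * t ^ (α - 1) - m := by linarith
  have hh := daf_h_deriv α m t hα ht hz.ne'
  refine daf_phase_deriv α m t _ _ _ f g (fun t => 1 / (t * (α * t ^ (α - 1) - m)))
    (fun t => 1 / (t * (α * t ^ (α - 1) - m)) + ((a + r) / κ) / t) ht hf hg hfg hh
    (hh.add (daf_inv_deriv _ t ht)) ?_ ?_
  · field_simp
  · have hq : 0 ≤ α * ((α - 1) * t ^ (α - 1 - 1)) := by
      have : 0 < α - 1 := by linarith
      positivity
    try simp only
    generalize α * ((α - 1) * t ^ (α - 1 - 1)) = q at *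
    generalize α * t ^ (α - 1) - m = z at *
    have i1 : 0 ≤ 1 / (t ^ 2 * z) := by positivity
    have i2 : 0 ≤ q / (t * z ^ 2) := by positivity
    rw [abs_of_nonpos (by linarith), abs_of_nonneg (by positivity)]
    have i3 : 1 / (t * z) ≤ 1 / (t * κ) := by gcongr
    have i4 : 1 / (t * z) * |(a + r * Real.sin (t ^ α)) / t| ≤ 1 / (t * κ) * ((a + r) / t) :=
      mul_le_mul i3 hb (abs_nonneg _) (by positivity)
    have i5 : 1 / (t * κ) * ((a + r) / t) = (a + r) / κ / t ^ 2 := by field_simp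
    linarith

/-- zone I -/
lemma daf_phase_low (a r α l t : ℝ) (f g : ℝ → ℝ) (ht : 0 < t)
    (ha : 0 < a) (hr0 : 0 ≤ r) (hα : 1 < α) (hl : 0 < l) (hlt : 1 / 2 ≤ l * t)
    (hpm : α * t ^ (α - 1) ≤ l)
    (hf : HasDerivAt f (-(2 * l + (a + r * Real.sin (t ^ α)) / t * g t) * g t) t)
    (hg : HasDerivAt g ((2 * l + (a + r * Real.sin (t ^ α)) / t * g t) * f t) t)
    (hfg : f t ^ 2 + g t ^ 2 = 1) (hb : |(a + r * Real.sin (t ^ α)) / t| ≤ (a + r) / t) :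
    ∃ d, HasDerivAt (fun t : ℝ => -(1 / (t * (α * t ^ (α - 1) - 2 * l)) *
        (Real.cos (t ^ α) * f t + Real.sin (t ^ α) * g t)) +
        (((1 + a + r) / l) / t - 2 / l * (α * t ^ (α - 1)))) d t ∧
      d ≤ (Real.sin (t ^ α) * f t - Real.cos (t ^ α) * g t) / t := by
  have hz : α * t ^ (α - 1) - 2 * l < 0 := by linarith
  have hh := daf_h_deriv α (2 * l) t hα ht hz.ne
  refine daf_phase_deriv α (2 * l) t _ _ _ f g (fun t => 1 / (t * (α * t ^ (α - 1) - 2 * l)))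
    (fun t => ((1 + a + r) / l) / t - 2 / l * (α * t ^ (α - 1))) ht hf hg hfg hh
    ((daf_inv_deriv _ t ht).sub ((daf_p_deriv α t ht).const_mul (2 / l))) ?_ ?_
  · have := hz.ne
    field_simp
  · have hq : 0 ≤ α * ((α - 1) * t ^ (α - 1 - 1)) := by
      have : 0 < α - 1 := by linarith
      positivity
    try simp only
    have hzl : l ≤ -(α * t ^ (α - 1) - 2 * l) := by linarith
    generalize α * ((α - 1) * t ^ (α - 1 - 1)) = q at *
    obtain ⟨z, hzz⟩ : ∃ z, α * t ^ (α - 1) - 2 * l = -z := ⟨_, (neg_neg _).symm⟩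
    rw [hzz] at hzl ⊢
    have hlz : l ≤ z := by linarith
    have hz0 : 0 < z := by linarith
    have i1 : 1 / (t ^ 2 * z) ≤ 1 / (t ^ 2 * l) := by gcongr
    have i2 : q / (t * z ^ 2) ≤ 2 / l * q := by
      have : 1 / (t * z ^ 2) ≤ 2 / l := by
        rw [div_le_div_iff₀ (by positivity) hl]
        have : l ^ 2 ≤ z ^ 2 := by gcongr
        nlinarith
      calc q / (t * z ^ 2) = 1 / (t * z ^ 2) * q := by ring
        _ ≤ _ := by gcongr
    have i0 : 0 ≤ 1 / (t ^ 2 * z) := by positivity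
    have i00 : 0 ≤ q / (t * z ^ 2) := by positivity
    have e1 : -(1 / (t ^ 2 * -z)) - q / (t * (-z) ^ 2) = 1 / (t ^ 2 * z) - q / (t * z ^ 2) := by
      rw [mul_neg, one_div_neg_eq_neg_one_div]; ring
    have i6 : |-(1 / (t ^ 2 * -z)) - q / (t * (-z) ^ 2)| ≤ 1 / (t ^ 2 * l) + 2 / l * q := by
      rw [e1, abs_le]; constructor <;> linarith
    have i3 : |1 / (t * -z)| ≤ 1 / (t * l) := by
      rw [mul_neg, one_div_neg_eq_neg_one_div, abs_neg, abs_of_nonneg (by positivity)]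
      gcongr
    have i4 : |1 / (t * -z)| * |(a + r * Real.sin (t ^ α)) / t| ≤ 1 / (t * l) * ((a + r) / t) :=
      mul_le_mul i3 hb (abs_nonneg _) (by positivity)
    have i5 : 1 / (t * l) * ((a + r) / t) + 1 / (t ^ 2 * l) = (1 + a + r) / l / t ^ 2 := by
      field_simp; ring
    linarith

/-- `R` piece -/
lemma daf_R_deriv (a r l t bt : ℝ) (f g : ℝ → ℝ) (ht : 0 < t) (ha : 0 < a) (hr0 : 0 ≤ r)
    (hl : 0 < l)
    (hg : HasDerivAt g ((2 * l + bt * g t) * f t) t)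
    (hfg : f t ^ 2 + g t ^ 2 = 1) (hb : |bt| ≤ (a + r) / t) :
    ∃ d, HasDerivAt (fun t : ℝ => (a / (2 * l)) / t * g t +
      (a / (2 * l) + a * (a + r) / (4 * l)) / t) d t ∧ d ≤ a / t * f t := by
  refine ⟨_, ((daf_inv_deriv _ t ht).mul hg).add (daf_inv_deriv _ t ht), ?_⟩
  generalize f t = x at *
  generalize g t = y at *
  have h1 : -y ≤ 1 := by nlinarith [sq_nonneg x]
  have h2 : |y * x| ≤ 1 / 2 := by
    rw [abs_le]; constructor <;> nlinarith [sq_nonneg (x - y), sq_nonneg (x + y)]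
  have h3 : bt * (y * x) ≤ (a + r) / t * (1 / 2) := by
    calc bt * (y * x) ≤ |bt * (y * x)| := le_abs_self _
      _ = |bt| * |y * x| := abs_mul _ _
      _ ≤ _ := mul_le_mul hb h2 (abs_nonneg _) (by positivity)
  have h4 : a / (2 * l) / t * (bt * (y * x)) ≤ a / (2 * l) / t * ((a + r) / t * (1 / 2)) := by
    gcongr
  have h5 : a / (2 * l) / t ^ 2 * (-y) ≤ a / (2 * l) / t ^ 2 * 1 := by gcongr
  have e1 : a / (2 * l) / t * ((a + r) / t * (1 / 2)) = a * (a + r) / (4 * l) / t ^ 2 := by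
    field_simp; norm_num
  have e2 : a / (2 * l) / t * ((2 * l) * x) = a / t * x := by field_simp
  have e3 : (a / (2 * l) + a * (a + r) / (4 * l)) / t ^ 2 =
    a / (2 * l) / t ^ 2 + a * (a + r) / (4 * l) / t ^ 2 := by ring
  rw [e3]
  linarith

/-- abstract polar data on an interval -/
def DafHyp (a r α l s T : ℝ) (Lg f g : ℝ → ℝ) : Prop :=
  ContinuousOn Lg (Icc s T) ∧ ContinuousOn f (Icc s T) ∧ ContinuousOn g (Icc s T) ∧
  (∀ t ∈ Icc s T, f t ^ 2 + g t ^ 2 = 1) ∧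
  ∀ t ∈ Ioo s T,
    HasDerivAt Lg (-((a + r * Real.sin (t ^ α)) / t * (1 + f t))) t ∧
    HasDerivAt f (-(2 * l + (a + r * Real.sin (t ^ α)) / t * g t) * g t) t ∧
    HasDerivAt g ((2 * l + (a + r * Real.sin (t ^ α)) / t * g t) * f t) t

lemma DafHyp.sub {a r α l s T : ℝ} {Lg f g : ℝ → ℝ} (h : DafHyp a r α l s T Lg f g)
    {x y : ℝ} (hx : s ≤ x) (hy : y ≤ T) : DafHyp a r α l x y Lg f g := by
  obtain ⟨h1, h2, h3, h4, h5⟩ := h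
  have hs : Icc x y ⊆ Icc s T := Icc_subset_Icc hx hy
  exact ⟨h1.mono hs, h2.mono hs, h3.mono hs, fun t ht => h4 t (hs ht),
    fun t ht => h5 t (Ioo_subset_Ioo hx hy ht)⟩

noncomputable def dafQ (a r α : ℝ) (t : ℝ) : ℝ :=
  a * Real.log t + r * (1 - Real.cos (t ^ α)) * (t ^ (-α) / α)

noncomputable def dafR (a r l : ℝ) (g : ℝ → ℝ) (t : ℝ) : ℝ :=
  (a / (2 * l)) / t * g t + (a / (2 * l) + a * (a + r) / (4 * l)) / t

noncomputable def dafM (a r α m κ : ℝ) (f g : ℝ → ℝ) (t : ℝ) : ℝ :=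
  -(1 / (t * (α * t ^ (α - 1) - m)) *
        (Real.cos (t ^ α) * f t + Real.sin (t ^ α) * g t)) +
        (1 / (t * (α * t ^ (α - 1) - m)) + ((a + r) / κ) / t)

noncomputable def dafLow (a r α l : ℝ) (f g : ℝ → ℝ) (t : ℝ) : ℝ :=
  -(1 / (t * (α * t ^ (α - 1) - 2 * l)) *
        (Real.cos (t ^ α) * f t + Real.sin (t ^ α) * g t)) +
        (((1 + a + r) / l) / t - 2 / l * (α * t ^ (α - 1)))

noncomputable def dafD (a r α l : ℝ) (Lg f g : ℝ → ℝ) (t : ℝ) : ℝ :=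
  Lg t + dafQ a r α t + dafR a r l g t + r / 2 * dafM a r α (-(2 * l)) (2 * l) f (fun t => -g t) t

lemma daf_b_abs (a r α t : ℝ) (ha : 0 < a) (hr0 : 0 ≤ r) (ht : 0 < t) :
    |(a + r * Real.sin (t ^ α)) / t| ≤ (a + r) / t := by
  rw [abs_div, abs_of_pos ht]
  gcongr
  rw [abs_le]
  constructor <;> nlinarith [Real.sin_le_one (t ^ α), Real.neg_one_le_sin (t ^ α)]

lemma dafD_deriv (a r α l t : ℝ) (Lg f g : ℝ → ℝ) (ht : 0 < t)
    (ha : 0 < a) (hr0 : 0 ≤ r) (hα : 1 < α) (hl : 0 < l)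
    (hL : HasDerivAt Lg (-((a + r * Real.sin (t ^ α)) / t * (1 + f t))) t)
    (hf : HasDerivAt f (-(2 * l + (a + r * Real.sin (t ^ α)) / t * g t) * g t) t)
    (hg : HasDerivAt g ((2 * l + (a + r * Real.sin (t ^ α)) / t * g t) * f t) t)
    (hfg : f t ^ 2 + g t ^ 2 = 1) :
    ∃ d, HasDerivAt (dafD a r α l Lg f g) d t ∧
      d ≤ -(r / 2 * ((Real.sin (t ^ α) * f t - Real.cos (t ^ α) * g t) / t)) := by
  have hb := daf_b_abs a r α t ha hr0 ht
  obtain ⟨d1, h1, i1⟩ := daf_Q_deriv a r α t hr0 hα ht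
  obtain ⟨d2, h2, i2⟩ := daf_R_deriv a r l t _ f g ht ha hr0 hl hg hfg hb
  obtain ⟨d3, h3, i3⟩ := daf_phase_mono a r α (-(2 * l)) (2 * l) t f (fun t => - g t) ht ha hr0 hα
    (by linarith) (by
      have : 0 ≤ α * t ^ (α - 1) := by positivity
      linarith)
    (hf.congr_deriv (by ring)) (hg.neg.congr_deriv (by ring)) (by simpa using hfg) hb
  refine ⟨_, ((hL.add h1).add h2).add (h3.const_mul (r / 2)), ?_⟩
  have h4 : r / 2 * d3 ≤ r / 2 * ((Real.sin (t ^ α) * f t - Real.cos (t ^ α) * -g t) / t) := by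
    gcongr
  have e : (a + r * Real.sin (t ^ α)) / t * (1 + f t) = (a + r * Real.sin (t ^ α)) / t + a / t * f t
    + r / 2 * ((Real.sin (t ^ α) * f t - Real.cos (t ^ α) * -g t) / t)
    + (r / 2 * ((Real.sin (t ^ α) * f t - Real.cos (t ^ α) * g t) / t)) := by ring
  rw [e]
  linarith

lemma daf_cont_h (α m s T : ℝ) (hs : 0 < s) (hα : 1 < α)
    (hne : ∀ t ∈ Icc s T, α * t ^ (α - 1) - m ≠ 0) :
    ContinuousOn (fun t : ℝ => 1 / (t * (α * t ^ (α - 1) - m))) (Icc s T) :=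
  fun t ht => (daf_h_deriv α m t hα (lt_of_lt_of_le hs ht.1) (hne t ht)).continuousAt.continuousWithinAt

lemma daf_cont_inv (c s T : ℝ) (hs : 0 < s) :
    ContinuousOn (fun t : ℝ => c / t) (Icc s T) :=
  fun t ht => (daf_inv_deriv c t (lt_of_lt_of_le hs ht.1)).continuousAt.continuousWithinAt

lemma daf_cont_pow (α s T : ℝ) (hs : 0 < s) :
    ContinuousOn (fun t : ℝ => t ^ α) (Icc s T) :=
  fun t ht => (Real.continuousAt_rpow_const t α
    (Or.inl (lt_of_lt_of_le hs ht.1).ne')).continuousWithinAt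

lemma dafM_cont (a r α m κ s T : ℝ) (f g : ℝ → ℝ) (hs : 0 < s) (hα : 1 < α)
    (hf : ContinuousOn f (Icc s T)) (hg : ContinuousOn g (Icc s T))
    (hne : ∀ t ∈ Icc s T, α * t ^ (α - 1) - m ≠ 0) :
    ContinuousOn (dafM a r α m κ f g) (Icc s T) := by
  have h1 := daf_cont_h α m s T hs hα hne
  have h2 := daf_cont_inv ((a + r) / κ) s T hs
  have h3 := daf_cont_pow α s T hs
  exact (h1.mul (((Real.continuous_cos.comp_continuousOn h3).mul hf).add ((Real.continuous_sin.comp_continuousOn h3).mul hg))).neg.add (h1.add h2)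

lemma dafLow_cont (a r α l s T : ℝ) (f g : ℝ → ℝ) (hs : 0 < s) (hα : 1 < α)
    (hf : ContinuousOn f (Icc s T)) (hg : ContinuousOn g (Icc s T))
    (hne : ∀ t ∈ Icc s T, α * t ^ (α - 1) - 2 * l ≠ 0) :
    ContinuousOn (dafLow a r α l f g) (Icc s T) := by
  have h1 := daf_cont_h α (2 * l) s T hs hα hne
  have h2 := daf_cont_inv ((1 + a + r) / l) s T hs
  have h3 := daf_cont_pow α s T hs
  have h4 := daf_cont_pow (α - 1) s T hs
  exact (h1.mul (((Real.continuous_cos.comp_continuousOn h3).mul hf).add ((Real.continuous_sin.comp_continuousOn h3).mul hg))).neg.add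
    (h2.sub (continuousOn_const.mul (continuousOn_const.mul h4)))

lemma dafD_cont (a r α l s T : ℝ) (Lg f g : ℝ → ℝ) (hs : 0 < s) (hα : 1 < α) (hl : 0 < l)
    (h : DafHyp a r α l s T Lg f g) : ContinuousOn (dafD a r α l Lg f g) (Icc s T) := by
  obtain ⟨h1, h2, h3, h4, h5⟩ := h
  have hQ : ContinuousOn (dafQ a r α) (Icc s T) := by
    have k1 := daf_cont_pow α s T hs
    have k2 := daf_cont_pow (-α) s T hs
    have k3 : ContinuousOn Real.log (Icc s T) := fun t ht =>
      (Real.continuousAt_log (lt_of_lt_of_le hs ht.1).ne').continuousWithinAt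
    exact (continuousOn_const.mul k3).add
      ((continuousOn_const.mul (continuousOn_const.sub (Real.continuous_cos.comp_continuousOn k1))).mul (k2.div_const α))
  have hR : ContinuousOn (dafR a r l g) (Icc s T) :=
    ((daf_cont_inv _ s T hs).mul h3).add (daf_cont_inv _ s T hs)
  have hM := dafM_cont a r α (-(2 * l)) (2 * l) s T f (fun t => -g t) hs hα h2 h3.neg (by
    intro t ht
    have : 0 < t := lt_of_lt_of_le hs ht.1
    have : 0 ≤ α * t ^ (α - 1) := by positivity
    apply ne_of_gt
    linarith)
  exact ((h1.add hQ).add hR).add (continuousOn_const.mul hM)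

lemma daf_glue (a r α l s T : ℝ) (Lg f g W : ℝ → ℝ) (hs : 0 < s) (hsT : s ≤ T)
    (ha : 0 < a) (hr0 : 0 ≤ r) (hα : 1 < α) (hl : 0 < l)
    (h : DafHyp a r α l s T Lg f g) (hW : ContinuousOn W (Icc s T))
    (hWd : ∀ t ∈ Ioo s T, ∃ d, HasDerivAt W d t ∧
      d ≤ (Real.sin (t ^ α) * f t - Real.cos (t ^ α) * g t) / t) :
    dafD a r α l Lg f g T ≤ dafD a r α l Lg f g s + r / 2 * (W s - W T) := by
  have hc := dafD_cont a r α l s T Lg f g hs hα hl h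
  obtain ⟨h1, h2, h3, h4, h5⟩ := h
  have hD : ∀ t ∈ Ioo s T, ∃ d, HasDerivAt (fun t => dafD a r α l Lg f g t + r / 2 * W t) d t ∧ d ≤ 0 := by
    intro t ht
    have ht0 : 0 < t := lt_trans hs ht.1
    obtain ⟨k1, k2, k3⟩ := h5 t ht
    obtain ⟨d1, j1, i1⟩ := dafD_deriv a r α l t Lg f g ht0 ha hr0 hα hl k1 k2 k3
      (h4 t (Ioo_subset_Icc_self ht))
    obtain ⟨d2, j2, i2⟩ := hWd t ht
    refine ⟨_, j1.add (j2.const_mul (r / 2)), ?_⟩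
    have : r / 2 * d2 ≤ r / 2 * ((Real.sin (t ^ α) * f t - Real.cos (t ^ α) * g t) / t) := by gcongr
    linarith
  have := daf_mono (fun t => dafD a r α l Lg f g t + r / 2 * W t) (fun t => deriv (fun t => dafD a r α l Lg f g t + r / 2 * W t) t) s T hsT
    (hc.add (continuousOn_const.mul hW))
    (fun t ht => by obtain ⟨d, hd, _⟩ := hD t ht; exact hd.differentiableAt.hasDerivAt)
    (fun t ht => by obtain ⟨d, hd, hd2⟩ := hD t ht; rw [hd.deriv]; exact hd2)
  linarith

lemma dafM_bounds (a r α m κ t : ℝ) (f g : ℝ → ℝ) (ht : 0 < t) (ha : 0 < a) (hr0 : 0 ≤ r)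
    (hκ : 0 < κ) (hpm : κ ≤ α * t ^ (α - 1) - m) (hκt : 1 / 2 ≤ κ * t)
    (hfg : f t ^ 2 + g t ^ 2 = 1) :
    0 ≤ dafM a r α m κ f g t ∧ dafM a r α m κ f g t ≤ (2 + a + r) / (κ * t) := by
  unfold dafM
  have hz : 0 < α * t ^ (α - 1) - m := by linarith
  have h1 := abs_le.1 (daf_C_bound α t f g hfg (1 / (t * (α * t ^ (α - 1) - m))))
  have h0 : 0 ≤ 1 / (t * (α * t ^ (α - 1) - m)) := by positivity
  rw [abs_of_nonneg h0] at h1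
  have h2 : 1 / (t * (α * t ^ (α - 1) - m)) ≤ 1 / (t * κ) := by gcongr
  have h3 : 0 ≤ (a + r) / κ / t := by positivity
  have e : (2 + a + r) / (κ * t) = 2 * (1 / (t * κ)) + (a + r) / κ / t := by
    field_simp; ring
  rw [e]
  constructor <;> linarith [h1.1, h1.2]

lemma daf_zone3 (a r α l s T : ℝ) (Lg f g : ℝ → ℝ) (hs : 0 < s) (hsT : s ≤ T)
    (ha : 0 < a) (hr0 : 0 ≤ r) (hα : 1 < α) (hl : 0 < l) (hls : 1 / 2 ≤ l * s)
    (h : DafHyp a r α l s T Lg f g) (hp : 3 * l ≤ α * s ^ (α - 1)) :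
    dafD a r α l Lg f g T ≤ dafD a r α l Lg f g s + r / 2 * (4 + 2 * (a + r)) := by
  have hpt : ∀ t ∈ Icc s T, l ≤ α * t ^ (α - 1) - 2 * l := by
    intro t ht
    have := daf_p_mono α s t hα hs ht.1
    linarith
  have hg := daf_glue a r α l s T Lg f g (dafM a r α (2 * l) l f g) hs hsT ha hr0 hα hl h
    (dafM_cont a r α (2 * l) l s T f g hs hα h.2.1 h.2.2.1
      (fun t ht => by have := hpt t ht; exact ne_of_gt (by linarith)))
    (fun t ht => by
      have ht0 : 0 < t := lt_trans hs ht.1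
      have := h.2.2.2.2 t ht
      exact daf_phase_mono a r α (2 * l) l t f g ht0 ha hr0 hα hl
        (hpt t (Ioo_subset_Icc_self ht)) this.2.1 this.2.2
        (h.2.2.2.1 t (Ioo_subset_Icc_self ht)) (daf_b_abs a r α t ha hr0 ht0))
  have hsm : s ∈ Icc s T := left_mem_Icc.2 hsT
  have hTm : T ∈ Icc s T := right_mem_Icc.2 hsT
  have b1 := (dafM_bounds a r α (2 * l) l s f g hs ha hr0 hl (hpt s hsm) hls (h.2.2.2.1 s hsm)).2
  have b2 := (dafM_bounds a r α (2 * l) l T f g (by linarith) ha hr0 hl (hpt T hTm)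
    (by nlinarith) (h.2.2.2.1 T hTm)).1
  have b3 : (2 + a + r) / (l * s) ≤ 4 + 2 * (a + r) := by
    rw [div_le_iff₀ (by linarith)]
    nlinarith
  have : r / 2 * (dafM a r α (2 * l) l f g s - dafM a r α (2 * l) l f g T) ≤
    r / 2 * (4 + 2 * (a + r)) := by
    apply mul_le_mul_of_nonneg_left _ (by linarith)
    linarith
  linarith

lemma daf_zone1 (a r α l s T : ℝ) (Lg f g : ℝ → ℝ) (hs : 0 < s) (hsT : s ≤ T)
    (ha : 0 < a) (hr0 : 0 ≤ r) (hα : 1 < α) (hl : 0 < l) (hls : 1 / 2 ≤ l * s)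
    (h : DafHyp a r α l s T Lg f g) (hp : α * T ^ (α - 1) ≤ l) :
    dafD a r α l Lg f g T ≤ dafD a r α l Lg f g s + r / 2 * (6 + 2 * (a + r)) := by
  have hT : 0 < T := by linarith
  have hpt : ∀ t ∈ Icc s T, α * t ^ (α - 1) ≤ l := by
    intro t ht
    have := daf_p_mono α t T hα (lt_of_lt_of_le hs ht.1) ht.2
    linarith
  have hg := daf_glue a r α l s T Lg f g (dafLow a r α l f g) hs hsT ha hr0 hα hl h
    (dafLow_cont a r α l s T f g hs hα h.2.1 h.2.2.1
      (fun t ht => by have := hpt t ht; exact ne_of_lt (by linarith)))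
    (fun t ht => by
      have ht0 : 0 < t := lt_trans hs ht.1
      have := h.2.2.2.2 t ht
      exact daf_phase_low a r α l t f g ht0 ha hr0 hα hl (by nlinarith [ht.1])
        (hpt t (Ioo_subset_Icc_self ht)) this.2.1 this.2.2
        (h.2.2.2.1 t (Ioo_subset_Icc_self ht)) (daf_b_abs a r α t ha hr0 ht0))
  have hsm : s ∈ Icc s T := left_mem_Icc.2 hsT
  have hTm : T ∈ Icc s T := right_mem_Icc.2 hsT
  have hab : ∀ t ∈ Icc s T, |1 / (t * (α * t ^ (α - 1) - 2 * l))| ≤ 1 / (l * t) := by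
    intro t ht
    have ht0 : 0 < t := (lt_of_lt_of_le hs ht.1)
    have := hpt t ht
    rw [abs_div, abs_one, abs_mul, abs_of_pos ht0, abs_of_neg (by linarith), mul_comm l t]
    gcongr
    linarith
  have c1 := abs_le.1 ((daf_C_bound α s f g (h.2.2.2.1 s hsm)
    (1 / (s * (α * s ^ (α - 1) - 2 * l)))).trans (hab s hsm))
  have c2 := abs_le.1 ((daf_C_bound α T f g (h.2.2.2.1 T hTm)
    (1 / (T * (α * T ^ (α - 1) - 2 * l)))).trans (hab T hTm))
  have b3 : (2 + a + r) / (l * s) ≤ 4 + 2 * (a + r) := by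
    rw [div_le_iff₀ (by linarith)]
    nlinarith
  have e1 : (1 + a + r) / l / s + 1 / (l * s) = (2 + a + r) / (l * s) := by field_simp; ring
  have e2 : (1 + a + r) / l / T - 1 / (l * T) = (a + r) / (l * T) := by field_simp; ring
  have e3 : 0 ≤ (a + r) / (l * T) := by positivity
  have e4 : 2 / l * (α * T ^ (α - 1)) ≤ 2 := by
    calc 2 / l * (α * T ^ (α - 1)) ≤ 2 / l * l := by gcongr
      _ = 2 := by field_simp
  have e5 : 0 ≤ 2 / l * (α * s ^ (α - 1)) := by positivity
  have : r / 2 * (dafLow a r α l f g s - dafLow a r α l f g T) ≤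
    r / 2 * (6 + 2 * (a + r)) := by
    apply mul_le_mul_of_nonneg_left _ (by linarith)
    unfold dafLow
    linarith [c1.1, c1.2, c2.1, c2.2]
  linarith

lemma daf_zone2 (a r α l s T : ℝ) (Lg f g : ℝ → ℝ) (hs : 0 < s) (hsT : s ≤ T)
    (ha : 0 < a) (hr0 : 0 ≤ r) (hα : 1 < α) (hl : 0 < l)
    (h : DafHyp a r α l s T Lg f g) (hp : l ≤ α * s ^ (α - 1)) (hp3 : α * T ^ (α - 1) ≤ 3 * l) :
    dafD a r α l Lg f g T ≤ dafD a r α l Lg f g s + r / 2 * (Real.log 3 / (α - 1)) := by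
  have hT : 0 < T := by linarith
  have hg := daf_glue a r α l s T Lg f g (fun t => -Real.log t) hs hsT ha hr0 hα hl h
    (fun t ht => (Real.continuousAt_log (lt_of_lt_of_le hs ht.1).ne').neg.continuousWithinAt)
    (fun t ht => by
      have ht0 : 0 < t := lt_trans hs ht.1
      refine ⟨_, (Real.hasDerivAt_log ht0.ne').neg, ?_⟩
      have hfg := h.2.2.2.1 t (Ioo_subset_Icc_self ht)
      have hsc := Real.sin_sq_add_cos_sq (t ^ α)
      rw [le_div_iff₀ ht0, neg_mul, inv_mul_cancel₀ ht0.ne']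
      nlinarith [sq_nonneg (Real.sin (t ^ α) + f t), sq_nonneg (Real.cos (t ^ α) - g t)])
  have h1 : T ^ (α - 1) ≤ 3 * s ^ (α - 1) := by
    have : α * T ^ (α - 1) ≤ α * (3 * s ^ (α - 1)) := by linarith
    exact le_of_mul_le_mul_left this (by linarith)
  have h2 := Real.log_le_log (by positivity) h1
  rw [Real.log_mul (by norm_num) (by positivity), Real.log_rpow hT, Real.log_rpow hs] at h2
  have h3 : Real.log T - Real.log s ≤ Real.log 3 / (α - 1) := by
    rw [le_div_iff₀ (by linarith)]; linarith
  have : r / 2 * (Real.log T - Real.log s) ≤ r / 2 * (Real.log 3 / (α - 1)) := by gcongr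
  linarith

lemma daf_split (α l s T : ℝ) (hs : 0 < s) (hsT : s ≤ T) (hα : 1 < α) (c : ℝ) :
    ∃ x ∈ Icc s T, (x = s ∨ α * x ^ (α - 1) ≤ c) ∧ (x = T ∨ c ≤ α * x ^ (α - 1)) := by
  by_cases h1 : c ≤ α * s ^ (α - 1)
  · exact ⟨s, left_mem_Icc.2 hsT, Or.inl rfl, Or.inr h1⟩
  by_cases h2 : α * T ^ (α - 1) ≤ c
  · exact ⟨T, right_mem_Icc.2 hsT, Or.inr h2, Or.inl rfl⟩
  push Not at h1 h2
  obtain ⟨x, hx, hxe⟩ := intermediate_value_Icc hsT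
    (continuousOn_const.mul (daf_cont_pow (α - 1) s T hs) :
      ContinuousOn (fun t : ℝ => α * t ^ (α - 1)) (Icc s T)) ⟨h1.le, h2.le⟩
  exact ⟨x, hx, Or.inr hxe.le, Or.inr hxe.ge⟩

lemma daf_hyper_abs (a r α l s T : ℝ) (Lg f g : ℝ → ℝ) (hs : 0 < s) (hsT : s ≤ T)
    (ha : 0 < a) (hr0 : 0 ≤ r) (hα : 1 < α) (hl : 0 < l) (hls : 1 / 2 ≤ l * s)
    (h : DafHyp a r α l s T Lg f g) :
    Lg T ≤ Lg s - a * Real.log (T / s) + (2 * r / (α * s ^ α) + 2 * a + a * (a + r) / 2 +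
      r / 2 * (12 + 5 * (a + r)) + r / 2 * (Real.log 3 / (α - 1))) := by
  have hT : 0 < T := by linarith
  have hsm : s ∈ Icc s T := left_mem_Icc.2 hsT
  have hTm : T ∈ Icc s T := right_mem_Icc.2 hsT
  have hlT : 1 / 2 ≤ l * T := by nlinarith
  have hlog : 0 ≤ Real.log 3 / (α - 1) :=
    div_nonneg (Real.log_nonneg (by norm_num)) (by linarith)
  have hD : dafD a r α l Lg f g T ≤ dafD a r α l Lg f g s + r / 2 * (6 + 2 * (a + r)) +
      r / 2 * (Real.log 3 / (α - 1)) + r / 2 * (4 + 2 * (a + r)) := by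
    obtain ⟨x, hx, hx1, hx2⟩ := daf_split α l s T hs hsT hα l
    have hx0 : 0 < x := lt_of_lt_of_le hs hx.1
    obtain ⟨y, hy, hy1, hy2⟩ := daf_split α l x T hx0 hx.2 hα (3 * l)
    have hy0 : 0 < y := lt_of_lt_of_le hx0 hy.1
    have z1 : dafD a r α l Lg f g x ≤ dafD a r α l Lg f g s + r / 2 * (6 + 2 * (a + r)) := by
      rcases hx1 with h1 | h1
      · rw [h1]
        have : 0 ≤ r / 2 * (6 + 2 * (a + r)) := by positivity
        linarith
      · exact daf_zone1 a r α l s x Lg f g hs hx.1 ha hr0 hα hl hls (h.sub le_rfl hx.2) h1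
    have z2 : dafD a r α l Lg f g y ≤ dafD a r α l Lg f g x + r / 2 * (Real.log 3 / (α - 1)) := by
      have h0 : 0 ≤ r / 2 * (Real.log 3 / (α - 1)) := by positivity
      rcases hy1 with h1 | h1
      · rw [h1]; linarith
      · rcases hx2 with h2 | h2
        · have : y = x := le_antisymm (h2 ▸ hy.2) hy.1
          rw [this]; linarith
        · exact daf_zone2 a r α l x y Lg f g hx0 hy.1 ha hr0 hα hl (h.sub hx.1 hy.2) h2 h1
    have z3 : dafD a r α l Lg f g T ≤ dafD a r α l Lg f g y + r / 2 * (4 + 2 * (a + r)) := by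
      rcases hy2 with h1 | h1
      · rw [h1]
        have : 0 ≤ r / 2 * (4 + 2 * (a + r)) := by positivity
        linarith
      · exact daf_zone3 a r α l y T Lg f g hy0 hy.2 ha hr0 hα hl (by nlinarith [hx.1, hy.1])
          (h.sub (hx.1.trans hy.1) le_rfl) h1
    linarith
  have hQ := daf_Q_bound a r α s T hr0 hα hs hsT
  have hR : dafR a r l g s - dafR a r l g T ≤ 2 * a + a * (a + r) / 2 := by
    unfold dafR
    have g1 : g s ≤ 1 := by nlinarith [h.2.2.2.1 s hsm, sq_nonneg (f s)]
    have g2 : -g T ≤ 1 := by nlinarith [h.2.2.2.1 T hTm, sq_nonneg (f T)]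
    have k1 : a / (2 * l) / s * g s ≤ a / (2 * l) / s * 1 := by gcongr
    have k2 : a / (2 * l) / T * (-g T) ≤ a / (2 * l) / T * 1 := by gcongr
    have k3 : (a / (2 * l) + a * (a + r) / (4 * l)) / T =
      a / (2 * l) / T + a * (a + r) / (4 * l) / T := by ring
    have k4 : 0 ≤ a * (a + r) / (4 * l) / T := by positivity
    have k5 : a / (2 * l) / s + (a / (2 * l) + a * (a + r) / (4 * l)) / s ≤ 2 * a + a * (a + r) / 2 := by
      have : a / (2 * l) / s + (a / (2 * l) + a * (a + r) / (4 * l)) / s =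
        (a + a * (a + r) / 4) / (l * s) := by field_simp; ring
      rw [this, div_le_iff₀ (by linarith)]
      have : 0 < a + a * (a + r) / 4 := by positivity
      nlinarith
    linarith
  have hMc : ∀ t, 0 < t → 2 * l ≤ α * t ^ (α - 1) - -(2 * l) := by
    intro t ht
    have : 0 ≤ α * t ^ (α - 1) := by positivity
    linarith
  have b1 := (dafM_bounds a r α (-(2 * l)) (2 * l) s f (fun t => -g t) hs ha hr0 (by linarith)
    (hMc s hs) (by linarith) (by simpa using h.2.2.2.1 s hsm)).2
  have b2 := (dafM_bounds a r α (-(2 * l)) (2 * l) T f (fun t => -g t) hT ha hr0 (by linarith)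
    (hMc T hT) (by linarith) (by simpa using h.2.2.2.1 T hTm)).1
  have b3 : (2 + a + r) / (2 * l * s) ≤ 2 + (a + r) := by
    rw [div_le_iff₀ (by linarith)]
    nlinarith
  have hM : r / 2 * (dafM a r α (-(2 * l)) (2 * l) f (fun t => -g t) s -
      dafM a r α (-(2 * l)) (2 * l) f (fun t => -g t) T) ≤ r / 2 * (2 + (a + r)) := by
    apply mul_le_mul_of_nonneg_left _ (by linarith)
    linarith
  unfold dafD dafQ at hD
  linarith

lemma daf_b_nonneg (a r α t : ℝ) (hr0 : 0 ≤ r) (hra : r ≤ a) (ht : 0 < t) :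
    0 ≤ (a + r * Real.sin (t ^ α)) / t := by
  apply div_nonneg _ ht.le
  nlinarith [Real.neg_one_le_sin (t ^ α)]

lemma daf_E_deriv (l t bt : ℝ) (u v : ℝ → ℝ) (hu : HasDerivAt u (v t) t)
    (hv : HasDerivAt v (-(bt * v t) - l ^ 2 * u t) t) :
    HasDerivAt (fun t => v t ^ 2 + l ^ 2 * u t ^ 2) (-(2 * bt * v t ^ 2)) t := by
  refine HasDerivAt.congr_deriv ((hv.pow 2).add ((hu.pow 2).const_mul (l ^ 2))) ?_
  simp
  ring

lemma daf_hyper (t0 a r α l s T : ℝ) (u v : ℝ → ℝ) (ht0 : 0 < t0) (hs : t0 ≤ s) (hsT : s ≤ T)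
    (ha : 0 < a) (hr0 : 0 ≤ r) (hra : r ≤ a) (hα : 1 < α) (hl : 0 < l) (hls : 1 / 2 ≤ l * s)
    (hu : ∀ t ∈ Ici t0, HasDerivAt u (v t) t) (hvc : ContinuousOn v (Ici t0))
    (hv : ∀ t, t0 < t → HasDerivAt v (-((a + r * Real.sin (t ^ α)) / t * v t) - l ^ 2 * u t) t) :
    v T ^ 2 + l ^ 2 * u T ^ 2 ≤ Real.exp (2 * r / (α * s ^ α) + 2 * a + a * (a + r) / 2 +
      r / 2 * (12 + 5 * (a + r)) + r / 2 * (Real.log 3 / (α - 1))) * (s / T) ^ a *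
      (v s ^ 2 + l ^ 2 * u s ^ 2) := by
  have hs0 : 0 < s := by linarith
  have hT0 : 0 < T := by linarith
  set E : ℝ → ℝ := fun t => v t ^ 2 + l ^ 2 * u t ^ 2 with hE
  have hsub : Icc s T ⊆ Ici t0 := fun t ht => hs.trans ht.1
  have huc : ContinuousOn u (Ici t0) := fun x hx => (hu x hx).continuousAt.continuousWithinAt
  have huc' := huc.mono hsub
  have hvc' := hvc.mono hsub
  have hEc : ContinuousOn E (Icc s T) := (hvc'.pow 2).add (continuousOn_const.mul (huc'.pow 2))
  have hEd : ∀ t ∈ Ioo s T, HasDerivAt E (-(2 * ((a + r * Real.sin (t ^ α)) / t) * v t ^ 2)) t :=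
    fun t ht => daf_E_deriv l t _ u v (hu t (hsub (Ioo_subset_Icc_self ht)))
      (hv t (lt_of_le_of_lt hs ht.1))
  have hE0 : ∀ t, 0 ≤ E t := fun t => by simp only [hE]; positivity
  change E T ≤ _ * E s
  rcases (hE0 T).eq_or_lt with h0 | hpos
  · rw [← h0]
    have := hE0 s
    positivity
  have hEpos : ∀ t ∈ Icc s T, 0 < E t := by
    intro t ht
    refine lt_of_lt_of_le hpos ?_
    refine daf_mono E _ t T ht.2 (hEc.mono (Icc_subset_Icc ht.1 le_rfl))
      (fun x hx => hEd x ⟨lt_of_le_of_lt ht.1 hx.1, hx.2⟩) ?_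
    intro x hx
    have := daf_b_nonneg a r α x hr0 hra (by linarith [ht.1, hx.1])
    have h2 := mul_nonneg this (sq_nonneg (v x))
    linarith
  have hyp : DafHyp a r α l s T (fun t => Real.log (E t))
      (fun t => (v t ^ 2 - l ^ 2 * u t ^ 2) / E t) (fun t => (2 * l * (u t * v t)) / E t) := by
    refine ⟨hEc.log fun t ht => (hEpos t ht).ne', ?_, ?_, ?_, ?_⟩
    · exact ((hvc'.pow 2).sub (continuousOn_const.mul (huc'.pow 2))).div hEc
        fun t ht => (hEpos t ht).ne'
    · exact (continuousOn_const.mul (huc'.mul hvc')).div hEc fun t ht => (hEpos t ht).ne'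
    · intro t ht
      have h1 := (hEpos t ht).ne'
      field_simp
      simp only [hE]
      ring
    · intro t ht
      have h1 := hEpos t (Ioo_subset_Icc_self ht)
      have hut := hu t (hsub (Ioo_subset_Icc_self ht))
      have hvt := hv t (lt_of_le_of_lt hs ht.1)
      have hEt := hEd t ht
      have hEe : E t = v t ^ 2 + l ^ 2 * u t ^ 2 := rfl
      have hX : v t ^ 2 = E t - l ^ 2 * u t ^ 2 := by rw [hEe]; ring
      generalize (a + r * Real.sin (t ^ α)) / t = β at *
      refine ⟨(hEt.log h1.ne').congr_deriv ?_, ?_, ?_⟩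
      · field_simp
        rw [hEe]; ring
      · refine (((hvt.pow 2).sub ((hut.pow 2).const_mul (l ^ 2))).div hEt h1.ne').congr_deriv ?_
        simp
        field_simp
        rw [hEe]; ring
      · refine (((hut.mul hvt).const_mul (2 * l)).div hEt h1.ne').congr_deriv ?_
        simp
        field_simp
        rw [hEe]; ring
  have key := daf_hyper_abs a r α l s T _ _ _ hs0 hsT ha hr0 hα hl hls hyp
  have h2 := Real.exp_le_exp.2 key
  rw [Real.exp_log hpos, Real.exp_add, sub_eq_add_neg, Real.exp_add,
    Real.exp_log (hEpos s (left_mem_Icc.2 hsT))] at h2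
  have e : Real.exp (-(a * Real.log (T / s))) = (s / T) ^ a := by
    rw [Real.rpow_def_of_pos (by positivity), Real.log_div hT0.ne' hs0.ne',
      Real.log_div hs0.ne' hT0.ne']
    congr 1; ring
  rw [e] at h2
  linarith

lemma daf_abs (f H f' H' : ℝ → ℝ) (s T : ℝ) (hsT : s ≤ T) (hf : ContinuousOn f (Icc s T))
    (hH : ContinuousOn H (Icc s T)) (hfd : ∀ t ∈ Ioo s T, HasDerivAt f (f' t) t)
    (hHd : ∀ t ∈ Ioo s T, HasDerivAt H (H' t) t) (hle : ∀ t ∈ Ioo s T, |f' t| ≤ H' t) :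
    |f T - f s| ≤ H T - H s := by
  have h1 := daf_mono (fun t => f t - H t) (fun t => f' t - H' t) s T hsT (hf.sub hH)
    (fun t ht => (hfd t ht).sub (hHd t ht)) (fun t ht => by linarith [(abs_le.1 (hle t ht)).2])
  have h2 := daf_mono (fun t => -f t - H t) (fun t => -f' t - H' t) s T hsT (hf.neg.sub hH)
    (fun t ht => (hfd t ht).neg.sub (hHd t ht)) (fun t ht => by linarith [(abs_le.1 (hle t ht)).1])
  rw [abs_le]; constructor <;> linarith

lemma daf_young (t0 s T c : ℝ) (ht0 : 0 < t0) (hs : 0 < s) (hT : 0 < T) (hc0 : 0 ≤ c) (hc : c ≤ 1) :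
    (t0 / s) ^ (2 * c) ≤ (t0 / T) ^ c * ((1 - c) + c * (T * t0) / s ^ 2) := by
  have h1 := Real.geom_mean_le_arith_mean2_weighted (w₁ := c) (w₂ := 1 - c) (p₁ := T * t0 / s ^ 2)
    (p₂ := 1) hc0 (by linarith) (by positivity) zero_le_one (by ring)
  rw [Real.one_rpow, mul_one, mul_one] at h1
  have h2 : (t0 / s) ^ (2 * c) = (t0 / T) ^ c * (T * t0 / s ^ 2) ^ c := by
    rw [← Real.mul_rpow (by positivity) (by positivity), Real.rpow_mul (by positivity)]
    congr 1
    rw [Real.rpow_two]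
    field_simp
  rw [h2]
  gcongr
  calc _ ≤ _ := h1
    _ = _ := by ring

lemma daf_alg (x y κ : ℝ) : (4 / 7 * (κ * (x + y))) ^ 2 + (κ * (y + 2 / 7 * (x + y))) ^ 2 ≤
      κ ^ 2 * (4 * y ^ 2 + 2 * x ^ 2) := by
  have : (4 / 7 * (x + y)) ^ 2 + (y + 2 / 7 * (x + y)) ^ 2 ≤ 4 * y ^ 2 + 2 * x ^ 2 := by
    nlinarith [sq_nonneg (x - y), sq_nonneg x, sq_nonneg y]
  have := mul_le_mul_of_nonneg_left this (sq_nonneg κ)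
  linarith

set_option maxHeartbeats 2000000 in
lemma daf_low (t0 a r α l T : ℝ) (u v : ℝ → ℝ) (ht0 : 0 < t0) (hT : t0 ≤ T)
    (ha : 0 < a) (hr0 : 0 ≤ r) (hra : r ≤ a) (hα : 1 < α) (hl : 0 ≤ l) (hls : l * T ≤ 1 / 2)
    (hu : ∀ t ∈ Ici t0, HasDerivAt u (v t) t) (hvc : ContinuousOn v (Ici t0))
    (hv : ∀ t, t0 < t → HasDerivAt v (-((a + r * Real.sin (t ^ α)) / t * v t) - l ^ 2 * u t) t) :
    v T ^ 2 + l ^ 2 * u T ^ 2 ≤ (t0 / T) ^ (min a 2) *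
      (4 * Real.exp (2 * (3 * r / (α * t0 ^ α))) * v t0 ^ 2 + (l ^ 2 + 2 / t0 ^ 2) * u t0 ^ 2) := by
  have hT0 : 0 < T := by linarith
  have huc : ContinuousOn u (Ici t0) := fun x hx => (hu x hx).continuousAt.continuousWithinAt
  set b : ℝ → ℝ := fun t => (a + r * Real.sin (t ^ α)) / t with hb
  have hbat : ∀ t, 0 < t → ContinuousAt b t := by
    intro t ht
    exact (daf_b_cont (t / 2) a r α (by linarith)).continuousAt (Ici_mem_nhds (by linarith))
  set P : ℝ → ℝ := fun t => ∫ s in t0..t, b s with hP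
  have hP0 : P t0 = 0 := by simp [hP]
  have hPd : ∀ t ∈ Ici t0, HasDerivAt P (b t) t := by
    intro t ht
    have ht1 : 0 < t := lt_of_lt_of_le ht0 ht
    apply intervalIntegral.integral_hasDerivAt_right
    · apply ContinuousOn.intervalIntegrable
      intro x hx
      rw [uIcc_of_le ht] at hx
      exact (hbat x (lt_of_lt_of_le ht0 hx.1)).continuousWithinAt
    · exact ContinuousOn.stronglyMeasurableAtFilter isOpen_Ioi
        (fun x hx => (hbat x hx).continuousWithinAt) t ht1
    · exact hbat t ht1
  have hPc : ContinuousOn P (Ici t0) := fun x hx => (hPd x hx).continuousAt.continuousWithinAt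
  have hb0 : ∀ t, 0 < t → 0 ≤ b t := fun t ht => daf_b_nonneg a r α t hr0 hra ht
  have hPmono : ∀ s t, t0 ≤ s → s ≤ t → P s ≤ P t := by
    intro s t hs hst
    have := daf_mono (fun t => -P t) (fun t => -b t) s t hst
      ((hPc.mono (fun x hx => hs.trans hx.1)).neg)
      (fun x hx => (hPd x (hs.trans hx.1.le)).neg)
      (fun x hx => by have := hb0 x (by linarith [hx.1]); linarith)
    linarith
  set c : ℝ := min a 2 / 2 with hc
  have hc0 : 0 ≤ c := by simp only [hc]; positivity
  have hc1 : c ≤ 1 := by simp only [hc]; linarith [min_le_right a 2]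
  have hca : 2 * c ≤ a := by simp only [hc]; linarith [min_le_left a 2]
  set B : ℝ := 2 * r / (α * t0 ^ α) with hB
  have hPexp : ∀ t ∈ Ici t0, Real.exp (-P t) ≤ Real.exp B * (t0 / t) ^ (2 * c) := by
    intro t ht
    have ht1 : 0 < t := lt_of_lt_of_le ht0 ht
    have ht' : t0 ≤ t := ht
    have hq : ∀ x ∈ Icc t0 t, ∃ d, HasDerivAt (fun t => dafQ a r α t - P t) d x ∧ d ≤ 0 := by
      intro x hx
      obtain ⟨d, h1, h2⟩ := daf_Q_deriv a r α x hr0 hα (lt_of_lt_of_le ht0 hx.1)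
      exact ⟨_, HasDerivAt.sub h1 (hPd x hx.1), by simp only [hb]; linarith⟩
    have h1 := daf_mono (fun t => dafQ a r α t - P t) (deriv (fun t => dafQ a r α t - P t)) t0 t ht
      (fun x hx => by obtain ⟨d, hd, _⟩ := hq x hx; exact hd.continuousAt.continuousWithinAt)
      (fun x hx => by
        obtain ⟨d, hd, _⟩ := hq x (Ioo_subset_Icc_self hx); exact hd.differentiableAt.hasDerivAt)
      (fun x hx => by obtain ⟨d, hd, h2⟩ := hq x (Ioo_subset_Icc_self hx); rw [hd.deriv]; exact h2)
    have h2 := daf_Q_bound a r α t0 t hr0 hα ht0 ht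
    simp only [hP0, dafQ] at h1
    have h3 : -P t ≤ B + -(a * Real.log (t / t0)) := by simp only [hB]; linarith
    have h4 := Real.exp_le_exp.2 h3
    rw [Real.exp_add] at h4
    have e : Real.exp (-(a * Real.log (t / t0))) = (t0 / t) ^ a := by
      rw [Real.rpow_def_of_pos (by positivity), Real.log_div ht1.ne' ht0.ne',
        Real.log_div ht0.ne' ht1.ne']
      congr 1; ring
    rw [e] at h4
    refine h4.trans ?_
    apply mul_le_mul_of_nonneg_left _ (Real.exp_pos B).le
    apply Real.rpow_le_rpow_of_exponent_ge (by positivity) _ hca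
    rw [div_le_one ht1]; exact ht'
  obtain ⟨τ, hτ, hτm⟩ := isCompact_Icc.exists_isMaxOn (nonempty_Icc.2 hT)
    ((huc.mono (Icc_subset_Ici_self : Icc t0 T ⊆ Ici t0)).abs)
  set M : ℝ := |u τ| with hM
  have hMm : ∀ t ∈ Icc t0 T, |u t| ≤ M := fun t ht => hτm ht
  have hM0 : 0 ≤ M := abs_nonneg _
  set y : ℝ := Real.exp B * |v t0| with hy
  have hy0 : 0 ≤ y := by positivity
  have hvb : ∀ t ∈ Icc t0 T, |v t| ≤ y * (t0 / t) ^ (2 * c) + l ^ 2 * M * t := by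
    intro t ht
    have hsub : Icc t0 t ⊆ Ici t0 := Icc_subset_Ici_self
    have h1 := daf_abs (fun s => Real.exp (P s) * v s) (fun s => Real.exp (P t) * l ^ 2 * M * s)
      (fun s => -(Real.exp (P s) * (l ^ 2 * u s))) (fun s => Real.exp (P t) * l ^ 2 * M) t0 t ht.1
      (((Real.continuous_exp.comp_continuousOn (hPc.mono hsub))).mul (hvc.mono hsub))
      (by fun_prop)
      (fun x hx => ((hPd x hx.1.le).exp.mul (hv x hx.1)).congr_deriv (by simp only [hb]; ring))
      (fun x hx => ((hasDerivAt_id x).const_mul _).congr_deriv (by ring))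
      (fun x hx => by
        have k1 := hMm x ⟨hx.1.le, hx.2.le.trans ht.2⟩
        have k2 := Real.exp_le_exp.2 (hPmono x t hx.1.le hx.2.le)
        rw [abs_neg, abs_mul, abs_mul, abs_of_pos (Real.exp_pos _), abs_of_nonneg (sq_nonneg l),
          mul_assoc]
        gcongr)
    simp only [hP0, Real.exp_zero, one_mul] at h1
    have h2 : Real.exp (P t) * |v t| ≤ |v t0| + Real.exp (P t) * l ^ 2 * M * t := by
      have k1 : |Real.exp (P t) * v t| = Real.exp (P t) * |v t| := by
        rw [abs_mul, abs_of_pos (Real.exp_pos _)]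
      have k2 := abs_sub_abs_le_abs_sub (Real.exp (P t) * v t) (v t0)
      have k3 : 0 ≤ Real.exp (P t) * l ^ 2 * M * t0 := by positivity
      linarith
    have h3 : |v t| ≤ Real.exp (-P t) * |v t0| + l ^ 2 * M * t := by
      have := mul_le_mul_of_nonneg_left h2 (Real.exp_pos (-P t)).le
      have e : Real.exp (-P t) * Real.exp (P t) = 1 := by rw [← Real.exp_add]; simp
      calc |v t| = (Real.exp (-P t) * Real.exp (P t)) * |v t| := by rw [e, one_mul]
        _ = Real.exp (-P t) * (Real.exp (P t) * |v t|) := by ring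
        _ ≤ Real.exp (-P t) * (|v t0| + Real.exp (P t) * l ^ 2 * M * t) := this
        _ = Real.exp (-P t) * |v t0| + (Real.exp (-P t) * Real.exp (P t)) * (l ^ 2 * M * t) := by ring
        _ = _ := by rw [e, one_mul]
    have h4 := mul_le_mul_of_nonneg_right (hPexp t ht.1) (abs_nonneg (v t0))
    simp only [hy]
    linarith
  set κ : ℝ := (t0 / T) ^ c with hκ
  have hκ0 : 0 < κ := by positivity
  have hq0 : t0 / T ≤ 1 := by rw [div_le_one hT0]; exact hT
  have hκ1 : κ ≤ 1 := Real.rpow_le_one (by positivity) hq0 hc0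
  have hκq : t0 / T ≤ κ := by
    have := Real.rpow_le_rpow_of_exponent_ge (by positivity : 0 < t0 / T) hq0 hc1
    rwa [Real.rpow_one] at this
  have hκ2 : (t0 / T) ^ (2 * c) = κ ^ 2 := by
    rw [mul_comm, Real.rpow_mul (by positivity), Real.rpow_two]
  have hMb : M ≤ |u t0| + y * κ * T + l ^ 2 * M * T ^ 2 / 2 := by
    have hτ0 : 0 < τ := lt_of_lt_of_le ht0 hτ.1
    have hsub : Icc t0 τ ⊆ Ici t0 := Icc_subset_Ici_self
    have hHd : ∀ x ∈ Icc t0 τ, HasDerivAt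
        (fun s => y * κ * ((1 - c) * s + (-(c * (T * t0))) / s) + l ^ 2 * M / 2 * s ^ 2)
        (y * κ * ((1 - c) + c * (T * t0) / x ^ 2) + l ^ 2 * M * x) x := by
      intro x hx
      have hx0 : 0 < x := lt_of_lt_of_le ht0 hx.1
      refine (((((hasDerivAt_id x).const_mul (1 - c)).add (daf_inv_deriv _ x hx0)).const_mul
        (y * κ)).add ((hasDerivAt_pow 2 x).const_mul (l ^ 2 * M / 2))).congr_deriv ?_
      simp
      ring
    have h1 := daf_abs u _ v _ t0 τ hτ.1 (huc.mono hsub)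
      (fun x hx => (hHd x hx).continuousAt.continuousWithinAt)
      (fun x hx => hu x hx.1.le) (fun x hx => hHd x (Ioo_subset_Icc_self hx))
      (fun x hx => by
        have hx0 : 0 < x := lt_trans ht0 hx.1
        refine (hvb x ⟨hx.1.le, hx.2.le.trans hτ.2⟩).trans ?_
        have := mul_le_mul_of_nonneg_left (daf_young t0 x T c ht0 hx0 hT0 hc0 hc1) hy0
        rw [← mul_assoc] at this
        linarith)
    have h2 := abs_sub_abs_le_abs_sub (u τ) (u t0)
    have h3 : (1 - c) * τ + (-(c * (T * t0))) / τ - ((1 - c) * t0 + (-(c * (T * t0))) / t0) ≤ T := by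
      have e1 : (-(c * (T * t0))) / t0 = -(c * T) := by field_simp
      have e2 : (-(c * (T * t0))) / τ ≤ 0 := by
        apply div_nonpos_of_nonpos_of_nonneg _ hτ0.le
        have : 0 ≤ c * (T * t0) := by positivity
        linarith
      rw [e1]
      have e3 : (1 - c) * τ ≤ (1 - c) * T := mul_le_mul_of_nonneg_left hτ.2 (by linarith)
      have e4 : 0 ≤ (1 - c) * t0 := mul_nonneg (by linarith) ht0.le
      linarith
    have h4 := mul_le_mul_of_nonneg_left h3 (by positivity : 0 ≤ y * κ)
    have h5 : l ^ 2 * M / 2 * τ ^ 2 ≤ l ^ 2 * M / 2 * T ^ 2 := by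
      have := hτ.2
      gcongr
    have h6 : 0 ≤ l ^ 2 * M / 2 * t0 ^ 2 := by positivity
    linarith
  -- algebra
  set x : ℝ := |u t0| / t0 with hx
  have hx0 : 0 ≤ x := by positivity
  have hlT2 : l ^ 2 * T ^ 2 ≤ 1 / 4 := by
    have : 0 ≤ l * T := by positivity
    nlinarith
  have hM2 : M ≤ 8 / 7 * (|u t0| + y * κ * T) := by nlinarith
  have hMx : M ≤ 8 / 7 * (κ * T * (x + y)) := by
    have : |u t0| ≤ κ * T * x := by
      have e : |u t0| = t0 / T * T * x := by simp only [hx]; field_simp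
      rw [e]; gcongr
    linarith
  have hlM : l * M ≤ 4 / 7 * (κ * (x + y)) := by
    calc l * M ≤ l * (8 / 7 * (κ * T * (x + y))) := by gcongr
      _ = (l * T) * (8 / 7 * (κ * (x + y))) := by ring
      _ ≤ 1 / 2 * (8 / 7 * (κ * (x + y))) := by gcongr
      _ = _ := by ring
  have hTm : T ∈ Icc t0 T := right_mem_Icc.2 hT
  have hu2 : l ^ 2 * u T ^ 2 ≤ (4 / 7 * (κ * (x + y))) ^ 2 := by
    rw [← sq_abs (u T), ← mul_pow]
    have := hMm T hTm
    have h2 : l * |u T| ≤ l * M := mul_le_mul_of_nonneg_left this hl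
    exact pow_le_pow_left₀ (mul_nonneg hl (abs_nonneg _)) (h2.trans hlM) 2
  have hv2 : v T ^ 2 ≤ (κ * (y + 2 / 7 * (x + y))) ^ 2 := by
    rw [← sq_abs (v T)]
    have h1 := hvb T hTm
    rw [hκ2] at h1
    have h2 : l ^ 2 * M * T ≤ 2 / 7 * (κ * (x + y)) := by
      calc l ^ 2 * M * T = (l * T) * (l * M) := by ring
        _ ≤ 1 / 2 * (4 / 7 * (κ * (x + y))) := by gcongr
        _ = _ := by ring
    have h3 : y * κ ^ 2 ≤ y * κ := by
      have : κ ^ 2 ≤ κ := by nlinarith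
      exact mul_le_mul_of_nonneg_left this hy0
    refine pow_le_pow_left₀ (abs_nonneg _) ?_ 2
    linarith
  have hfin : (4 / 7 * (κ * (x + y))) ^ 2 + (κ * (y + 2 / 7 * (x + y))) ^ 2 ≤
      κ ^ 2 * (4 * y ^ 2 + 2 * x ^ 2) := daf_alg x y κ
  have hκe : (t0 / T) ^ (min a 2) = κ ^ 2 := by
    rw [← hκ2]; congr 1; simp only [hc]; ring
  rw [hκe]
  have hx2 : x ^ 2 = u t0 ^ 2 / t0 ^ 2 := by simp only [hx, div_pow, sq_abs]
  have hy2 : y ^ 2 ≤ Real.exp (2 * (3 * r / (α * t0 ^ α))) * v t0 ^ 2 := by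
    simp only [hy, mul_pow, sq_abs]
    gcongr
    rw [← Real.exp_nat_mul]
    apply Real.exp_le_exp.2
    simp only [hB]
    push_cast
    gcongr
    norm_num
  have hlast : κ ^ 2 * (4 * y ^ 2 + 2 * x ^ 2) ≤ κ ^ 2 * (4 * Real.exp (2 * (3 * r / (α * t0 ^ α))) * v t0 ^ 2 + (l ^ 2 + 2 / t0 ^ 2) * u t0 ^ 2) := by
    gcongr κ ^ 2 * ?_
    have e : (l ^ 2 + 2 / t0 ^ 2) * u t0 ^ 2 = l ^ 2 * u t0 ^ 2 + 2 * (u t0 ^ 2 / t0 ^ 2) := by ring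
    rw [e, hx2]
    have : 0 ≤ l ^ 2 * u t0 ^ 2 := by positivity
    linarith
  linarith

lemma daf_point (t0 a r α l T : ℝ) (u v : ℝ → ℝ) (ht0 : 0 < t0) (hT : t0 ≤ T)
    (ha : 0 < a) (hr0 : 0 ≤ r) (hra : r ≤ a) (hα : 1 < α) (hl : 0 ≤ l)
    (hsol : IsDampedSol t0 (fun t => (a + r * Real.sin (t ^ α)) / t) l u v) :
    v T ^ 2 + l ^ 2 * u T ^ 2 ≤ Real.exp (a * (a + r + 8) + 5 * r * (a + r + 4) / 2
            + 3 * r / (α * t0 ^ α) + r * Real.log 3 / (α - 1)) * (t0 / T) ^ (min a 2) *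
      (4 * Real.exp (2 * (3 * r / (α * t0 ^ α))) * v t0 ^ 2 + (l ^ 2 + 2 / t0 ^ 2) * u t0 ^ 2) := by
  have hv := daf_sol_deriv t0 l _ u v (daf_b_cont t0 a r α ht0) hsol
  obtain ⟨hu, hvc, -⟩ := hsol
  have hT0 : 0 < T := by linarith
  set D := 4 * Real.exp (2 * (3 * r / (α * t0 ^ α))) * v t0 ^ 2 + (l ^ 2 + 2 / t0 ^ 2) * u t0 ^ 2 with hD
  have hD0 : 0 ≤ D := by positivity
  have hlog : 0 ≤ r * Real.log 3 / (α - 1) :=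
    div_nonneg (mul_nonneg hr0 (Real.log_nonneg (by norm_num))) (by linarith)
  set G := a * (a + r + 8) + 5 * r * (a + r + 4) / 2
            + 3 * r / (α * t0 ^ α) + r * Real.log 3 / (α - 1) with hG
  have hG0 : 0 ≤ G := by positivity
  have hK : ∀ s, t0 ≤ s → (2 * r / (α * s ^ α) + 2 * a + a * (a + r) / 2 +
      r / 2 * (12 + 5 * (a + r)) + r / 2 * (Real.log 3 / (α - 1))) ≤ G := by
    intro s hs
    have hs0 : 0 < s := by linarith
    have h1 : 2 * r / (α * s ^ α) ≤ 3 * r / (α * t0 ^ α) := by gcongr <;> norm_num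
    have h2 : r / 2 * (Real.log 3 / (α - 1)) = (r * Real.log 3 / (α - 1)) / 2 := by ring
    have h3 : 2 * a + a * (a + r) / 2 ≤ a * (a + r + 8) := by nlinarith
    rw [h2, hG]
    linarith
  by_cases hcase : l * T ≤ 1 / 2
  · have h1 := daf_low t0 a r α l T u v ht0 hT ha hr0 hra hα hl hcase hu hvc hv
    have h2 : 0 ≤ (t0 / T) ^ (min a 2) * D := by positivity
    have h3 : 1 ≤ Real.exp G := Real.one_le_exp hG0
    calc _ ≤ (t0 / T) ^ (min a 2) * D := h1
      _ ≤ Real.exp G * ((t0 / T) ^ (min a 2) * D) := le_mul_of_one_le_left h2 h3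
      _ = _ := by ring
  push Not at hcase
  have hl0 : 0 < l := by
    rcases hl.eq_or_lt with h | h
    · rw [← h] at hcase; norm_num at hcase
    · exact h
  have hmain : ∀ s, t0 ≤ s → s ≤ T → 1 / 2 ≤ l * s →
      v s ^ 2 + l ^ 2 * u s ^ 2 ≤ (t0 / s) ^ (min a 2) * D →
      v T ^ 2 + l ^ 2 * u T ^ 2 ≤ Real.exp G * (t0 / T) ^ (min a 2) * D := by
    intro s hs hsT hls hE
    have hs0 : 0 < s := by linarith
    have h1 := daf_hyper t0 a r α l s T u v ht0 hs hsT ha hr0 hra hα hl0 hls hu hvc hv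
    have h2 := Real.exp_le_exp.2 (hK s hs)
    have h3 : (s / T) ^ a ≤ (s / T) ^ (min a 2) :=
      Real.rpow_le_rpow_of_exponent_ge (by positivity) (by rw [div_le_one hT0]; exact hsT)
        (min_le_left _ _)
    have h4 : (s / T) ^ (min a 2) * (t0 / s) ^ (min a 2) = (t0 / T) ^ (min a 2) := by
      rw [← Real.mul_rpow (by positivity) (by positivity)]
      congr 1; field_simp
    calc _ ≤ _ := h1
      _ ≤ Real.exp G * (s / T) ^ (min a 2) * ((t0 / s) ^ (min a 2) * D) := by gcongr
      _ = Real.exp G * ((s / T) ^ (min a 2) * (t0 / s) ^ (min a 2)) * D := by ring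
      _ = _ := by rw [h4]
  by_cases hc2 : 1 / 2 ≤ l * t0
  · apply hmain t0 le_rfl hT hc2
    rw [div_self ht0.ne', Real.one_rpow, one_mul, hD]
    have h1 : 1 ≤ Real.exp (2 * (3 * r / (α * t0 ^ α))) := Real.one_le_exp (by positivity)
    have h2 : v t0 ^ 2 ≤ 4 * Real.exp (2 * (3 * r / (α * t0 ^ α))) * v t0 ^ 2 :=
      le_mul_of_one_le_left (sq_nonneg _) (by linarith)
    have h3 : 0 ≤ 2 / t0 ^ 2 * u t0 ^ 2 := by positivity
    linarith
  · push Not at hc2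
    have e : l * (1 / (2 * l)) = 1 / 2 := by field_simp
    have hs : t0 ≤ 1 / (2 * l) := by rw [le_div_iff₀ (by linarith)]; linarith
    have hsT : 1 / (2 * l) ≤ T := by rw [div_le_iff₀ (by linarith)]; linarith
    exact hmain _ hs hsT e.ge
      (daf_low t0 a r α l _ u v ht0 hs ha hr0 hra hα hl e.le hu hvc hv)


theorem decay_fast_oscillations_PDE
    {X : Type*} [MeasurableSpace X] (μ : Measure X)
    (t0 a r α : ℝ) (ht0 : 0 < t0) (ha : 0 < a) (hr0 : 0 ≤ r) (hra : r ≤ a) (hα : 1 < α)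
    (Λ : X → ℝ) (hΛmeas : Measurable Λ) (hΛpos : ∀ ξ, 0 ≤ Λ ξ)
    (u u' : ℝ → X → ℝ)
    (hsol : ∀ ξ, IsDampedSol t0 (fun t => (a + r * Real.sin (t ^ α)) / t) (Λ ξ)
      (fun t => u t ξ) (fun t => u' t ξ))
    (hmeas : ∀ t ≥ t0, Measurable (u t) ∧ Measurable (u' t)) :
    ∀ t ≥ t0,
      (∫⁻ ξ, ENNReal.ofReal (u' t ξ ^ 2 + Λ ξ ^ 2 * u t ξ ^ 2) ∂μ) ≤
        ENNReal.ofReal (Real.exp (a * (a + r + 8) + 5 * r * (a + r + 4) / 2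
            + 3 * r / (α * t0 ^ α) + r * Real.log 3 / (α - 1))) *
          (∫⁻ ξ, ENNReal.ofReal
            (4 * Real.exp (2 * (3 * r / (α * t0 ^ α))) * u' t0 ξ ^ 2 +
              (Λ ξ ^ 2 + 2 / t0 ^ 2) * u t0 ξ ^ 2) ∂μ) *
          ENNReal.ofReal ((t0 / t) ^ (min a 2)) := by
  intro t ht
  have ht0' : 0 < t := lt_of_lt_of_le ht0 ht
  rw [mul_assoc, mul_comm (lintegral _ _), ← mul_assoc, ← ENNReal.ofReal_mul (Real.exp_pos _).le,
    ← lintegral_const_mul' _ _ ENNReal.ofReal_ne_top]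
  refine lintegral_mono fun ξ => ?_
  rw [← ENNReal.ofReal_mul (by positivity)]
  exact ENNReal.ofReal_le_ofReal (daf_point t0 a r α (Λ ξ) t (fun t => u t ξ) (fun t => u' t ξ)
    ht0 ht ha hr0 hra hα (hΛpos ξ) (hsol ξ))
end
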